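/- arXiv:2008.13393 — 4 statements merged into one kernel-verified Lean document; each statement's English description precedes it below -/
import Mathlib

section
/- Let X be a separable Banach space, T a bounded linear operator on X, X₀ a dense subset of X, and S : X₀ → X₀ a mapping satisfying T(S(x)) = x for all x ∈ X₀. If Λ is a countable, relatively compact, nonempty subset of the open interval (a_T(X₀,S), b_T(X₀,S)), then ⋂_{λ∈Λ} FHC(λT) ≠ ∅. -/
open Filter Topology
open scoped ENNReal NNReal

/-- Lower density of a set of natural numbers. -/
noncomputable def lowerDensity (E : Set ℕ) : ℝ :=
  Filter.liminf (fun n : ℕ =>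
    (∑ k ∈ Finset.range (n + 1), Set.indicator E (fun _ => (1 : ℝ)) k) / ((n : ℝ) + 1))
    Filter.atTop

/-- The set of frequently hypercyclic vectors of an operator. -/
noncomputable def FHC {X : Type*} [NormedAddCommGroup X] [NormedSpace ℝ X]
    (T : X →L[ℝ] X) : Set X :=
  {x | ∀ U : Set X, IsOpen U → U.Nonempty → 0 < lowerDensity {n : ℕ | (T ^ n) x ∈ U}}

/-- `a_T(X₀,S) = sup_{x ∈ X₀} limsup_n ‖Sⁿx‖^{1/n}`, computed in `ℝ≥0∞`. -/
noncomputable def aT {X : Type*} [NormedAddCommGroup X] (X₀ : Set X) (S : X₀ → X₀) : ℝ≥0∞ :=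
  ⨆ x : X₀, Filter.limsup
    (fun n : ℕ => (‖((S^[n] x : X₀) : X)‖₊ : ℝ≥0∞) ^ (1 / (n : ℝ))) Filter.atTop

/-- `b_T(X₀,S) = inf_{x ∈ X₀} (limsup_n ‖Tⁿx‖^{1/n})⁻¹`, computed in `ℝ≥0∞`
(so that it is `+∞` when the limsup vanishes). -/
noncomputable def bT {X : Type*} [NormedAddCommGroup X] [NormedSpace ℝ X]
    (T : X →L[ℝ] X) (X₀ : Set X) : ℝ≥0∞ :=
  ⨅ x : X₀, (Filter.limsup
    (fun n : ℕ => (‖(T ^ n) (x : X)‖₊ : ℝ≥0∞) ^ (1 / (n : ℝ))) Filter.atTop)⁻¹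

theorem aux_lowerDensity_pos {E F : Set ℕ} (hEF : E ⊆ F) (δ : ℝ) (hδ : 0 < δ)
    (h : ∀ᶠ n : ℕ in atTop, δ * ((n : ℝ) + 1) ≤
      ∑ k ∈ Finset.range (n + 1), Set.indicator E (fun _ => (1 : ℝ)) k) :
    0 < lowerDensity F := by
  refine lt_of_lt_of_le hδ ?_
  unfold lowerDensity
  refine le_liminf_of_le ?_ ?_
  · refine Filter.IsBoundedUnder.isCoboundedUnder_ge ?_
    refine ⟨1, ?_⟩
    simp only [eventually_map]
    refine Eventually.of_forall fun n => ?_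
    have hn : (0 : ℝ) < (n : ℝ) + 1 := by positivity
    rw [div_le_one hn]
    calc _ ≤ ∑ k ∈ Finset.range (n + 1), (1 : ℝ) := by
          refine Finset.sum_le_sum fun k _ => ?_
          exact Set.indicator_le_self' (fun _ _ => zero_le_one) k
      _ = _ := by simp
  · filter_upwards [h] with n hn
    have hn' : (0 : ℝ) < (n : ℝ) + 1 := by positivity
    rw [le_div_iff₀ hn']
    refine hn.trans (Finset.sum_le_sum fun k _ => ?_)
    exact Set.indicator_le_indicator_of_subset hEF (fun _ => zero_le_one) k

/-- The block sets. -/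
def auxA (c : ℕ) (s : ℕ → ℕ) (i : ℕ) : Set ℕ :=
  {n | c ^ s i ∣ n ∧ ∃ t : ℕ, s i < 2 ^ i * (2 * t + 1) ∧
    c ^ (2 ^ i * (2 * t + 1)) ≤ n ∧ n < 2 * c ^ (2 ^ i * (2 * t + 1))}

theorem aux_val {i j t u : ℕ} (h : 2 ^ i * (2 * t + 1) = 2 ^ j * (2 * u + 1)) : i = j := by
  have key : ∀ i t : ℕ, padicValNat 2 (2 ^ i * (2 * t + 1)) = i := by
    intro i t
    rw [padicValNat.mul (by positivity) (by positivity), padicValNat.prime_pow,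
      padicValNat.eq_zero_of_not_dvd (by omega), add_zero]
  rw [← key i t, h, key]

theorem auxA_density (c : ℕ) (hc : 2 ≤ c) (s : ℕ → ℕ) (i : ℕ) :
    ∃ δ : ℝ, 0 < δ ∧ ∀ᶠ n : ℕ in atTop, δ * ((n : ℝ) + 1) ≤
      ∑ k ∈ Finset.range (n + 1), Set.indicator (auxA c s i) (fun _ => (1 : ℝ)) k := by
  set P := 2 ^ (i + 1) with hP
  have hPi : P = 2 * 2 ^ i := by rw [hP, pow_succ]; ring
  have h2i : 0 < 2 ^ i := by positivity
  have hc0 : (0 : ℝ) < c := by exact_mod_cast (by omega : 0 < c)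
  refine ⟨1 / (c : ℝ) ^ (s i + 2 * P + 1), by positivity, ?_⟩
  filter_upwards [eventually_ge_atTop (c ^ (2 * P + s i + 1))] with n hn
  have hn0 : n ≠ 0 := by
    have : 0 < c ^ (2 * P + s i + 1) := by positivity
    omega
  set k := Nat.log c n with hk
  have hk1 : c ^ k ≤ n := Nat.pow_log_le_self c hn0
  have hk2 : n < c ^ (k + 1) := Nat.lt_pow_succ_log_self (by omega) n
  have hk3 : 2 * P + s i + 1 ≤ k := by
    have := (Nat.pow_lt_pow_iff_right (a := c) (by omega)).1 (hn.trans_lt hk2)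
    omega
  obtain ⟨q, hq⟩ : ∃ q, k / P = q + 1 := by
    refine ⟨k / P - 1, ?_⟩
    have : 1 ≤ k / P := (Nat.one_le_div_iff (by positivity)).2 (by omega)
    omega
  set m := 2 ^ i * (2 * q + 1) with hm
  have hm' : m = P * q + 2 ^ i := by rw [hm, hPi]; ring
  have hd := Nat.div_add_mod k P
  have hlt := Nat.mod_lt k (show P > 0 by omega)
  rw [hq, mul_add, mul_one] at hd
  have hm1 : m + 1 ≤ k := by omega
  have hm2 : k ≤ m + 2 * P := by omega
  have hm3 : s i < m := by omega
  have hcs : 0 < c ^ s i := by positivity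
  have hsplit : c ^ m = c ^ (m - s i) * c ^ s i := by
    rw [← pow_add]; congr 1; omega
  have hinj : Function.Injective (fun t : ℕ => c ^ m + t * c ^ s i) := by
    intro a b hab
    simp only at hab
    exact Nat.eq_of_mul_eq_mul_right hcs (by omega)
  have hmem : ∀ t < c ^ (m - s i), c ^ m + t * c ^ s i < 2 * c ^ m := by
    intro t ht
    have : t * c ^ s i < c ^ (m - s i) * c ^ s i := Nat.mul_lt_mul_of_pos_right ht hcs
    omega
  have hsub : (Finset.range (c ^ (m - s i))).image (fun t : ℕ => c ^ m + t * c ^ s i) ⊆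
      Finset.range (n + 1) := by
    intro x hx
    obtain ⟨t, ht, rfl⟩ := Finset.mem_image.1 hx
    have h1 := hmem t (Finset.mem_range.1 ht)
    have h2 : 2 * c ^ m ≤ c ^ (m + 1) := by
      rw [pow_succ, mul_comm]; exact Nat.mul_le_mul_left _ hc
    have h3 : c ^ (m + 1) ≤ c ^ k := Nat.pow_le_pow_right (by omega) hm1
    simp only [Finset.mem_range]; omega
  have hsum : ((c ^ (m - s i) : ℕ) : ℝ) ≤
      ∑ k ∈ Finset.range (n + 1), Set.indicator (auxA c s i) (fun _ => (1 : ℝ)) k := by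
    refine le_trans ?_ (Finset.sum_le_sum_of_subset_of_nonneg hsub
      (fun _ _ _ => Set.indicator_nonneg (fun _ _ => zero_le_one) _))
    rw [Finset.sum_image (fun a _ b _ h => hinj h)]
    rw [Finset.sum_congr rfl (g := fun _ => (1 : ℝ))]
    · simp
    · intro t ht
      refine Set.indicator_of_mem ?_ _
      refine ⟨?_, q, hm3, Nat.le_add_right _ _, hmem t (Finset.mem_range.1 ht)⟩
      exact Dvd.dvd.add (hsplit ▸ Dvd.intro_left _ rfl) (Dvd.intro_left _ rfl)
  refine le_trans ?_ hsum
  rw [div_mul_eq_mul_div, one_mul, div_le_iff₀ (by positivity)]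
  have : n + 1 ≤ c ^ (m - s i) * c ^ (s i + 2 * P + 1) := by
    rw [← pow_add]
    refine le_trans hk2 (Nat.pow_le_pow_right (by omega) (by omega))
  exact_mod_cast this

theorem auxA_same (c : ℕ) (s : ℕ → ℕ) (i n m : ℕ)
    (hn : n ∈ auxA c s i) (hm : m ∈ auxA c s i) (h : m < n) : c ^ s i ≤ n - m :=
  Nat.le_of_dvd (by omega) (Nat.dvd_sub hn.1 hm.1)

theorem auxA_ge (c : ℕ) (hc : 1 ≤ c) (s : ℕ → ℕ) (i n : ℕ)
    (hn : n ∈ auxA c s i) : c ^ s i ≤ n := by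
  obtain ⟨_, t, ht, h1, h2⟩ := hn
  exact (Nat.pow_le_pow_right hc ht.le).trans h1

theorem auxA_diff (d : ℕ) (hd : 2 ≤ d) (s : ℕ → ℕ) (i j n m : ℕ) (hij : i ≠ j)
    (hn : n ∈ auxA (2 * d) s i) (hm : m ∈ auxA (2 * d) s j) (h : m ≤ n) :
    d * m ≤ n ∧ (2 * d) ^ s i ≤ n - m ∧ (2 * d) ^ s j ≤ n - m := by
  obtain ⟨_, t, ht, h1, h2⟩ := hn
  obtain ⟨_, u, hu, h3, h4⟩ := hm
  have hne : 2 ^ i * (2 * t + 1) ≠ 2 ^ j * (2 * u + 1) := fun h => hij (aux_val h)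
  generalize 2 ^ i * (2 * t + 1) = a at *
  generalize 2 ^ j * (2 * u + 1) = b at *
  have hlt : b < a := by
    by_contra hcon
    have hab : a + 1 ≤ b := by omega
    have e1 : (2 * d) ^ (a + 1) ≤ (2 * d) ^ b := Nat.pow_le_pow_right (by omega) hab
    rw [pow_succ] at e1
    have : (2 * d) ^ a * 2 ≤ (2 * d) ^ a * (2 * d) := Nat.mul_le_mul_left _ (by omega)
    omega
  obtain ⟨a, rfl⟩ : ∃ a', a = a' + 1 := ⟨a - 1, by omega⟩
  have e1 : (2 * d) ^ b ≤ (2 * d) ^ a := Nat.pow_le_pow_right (by omega) (by omega)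
  have e2 : (2 * d) ^ s i ≤ (2 * d) ^ a := Nat.pow_le_pow_right (by omega) (by omega)
  have e3 : (2 * d) ^ s j ≤ (2 * d) ^ a := Nat.pow_le_pow_right (by omega) (by omega)
  rw [pow_succ] at h1 h2
  generalize (2 * d) ^ a = A at *
  generalize (2 * d) ^ b = B at *
  have f1 : d * m ≤ n := by nlinarith
  have f2 : A * 4 ≤ A * (2 * d) := Nat.mul_le_mul_left _ (by omega)
  have f3 : 2 * m ≤ d * m := Nat.mul_le_mul_right _ hd
  exact ⟨f1, by omega, by omega⟩

theorem aux_growth (u : ℕ → ℝ≥0) (ρ : ℝ) (hρ : 0 < ρ)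
    (h : Filter.limsup (fun n : ℕ => (u n : ℝ≥0∞) ^ (1 / (n : ℝ))) atTop < ENNReal.ofReal ρ) :
    ∃ C : ℝ, 0 ≤ C ∧ ∀ n, (u n : ℝ) ≤ C * ρ ^ n := by
  have h1 := eventually_lt_of_limsup_lt h
  obtain ⟨N, hN⟩ := eventually_atTop.1 h1
  have hbig : ∀ n, N + 1 ≤ n → (u n : ℝ) ≤ ρ ^ n := by
    intro n hn
    have h2 := (hN n (by omega)).le
    have hn0 : (0 : ℝ) < n := by exact_mod_cast (by omega : 0 < n)
    have h3 := ENNReal.rpow_le_rpow h2 hn0.le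
    rw [← ENNReal.rpow_mul, one_div, inv_mul_cancel₀ hn0.ne', ENNReal.rpow_one,
      ENNReal.rpow_natCast, ← ENNReal.ofReal_pow hρ.le] at h3
    have h4 := ENNReal.toReal_mono ENNReal.ofReal_ne_top h3
    rwa [ENNReal.toReal_ofReal (by positivity), ENNReal.coe_toReal] at h4
  refine ⟨1 + ∑ k ∈ Finset.range (N + 1), (u k : ℝ) / ρ ^ k, by positivity, fun n => ?_⟩
  have hs : 0 ≤ ∑ k ∈ Finset.range (N + 1), (u k : ℝ) / ρ ^ k := by positivity
  have hp : 0 < ρ ^ n := by positivity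
  by_cases hn : N + 1 ≤ n
  · have := hbig n hn
    nlinarith
  · have := Finset.single_le_sum (f := fun k => (u k : ℝ) / ρ ^ k)
      (s := Finset.range (N + 1)) (fun k _ => by positivity)
      (Finset.mem_range.2 (by omega : n < N + 1))
    rw [div_le_iff₀ hp] at this
    nlinarith

theorem aux_iter {X : Type*} [NormedAddCommGroup X] [NormedSpace ℝ X]
    (T : X →L[ℝ] X) (X₀ : Set X) (S : X₀ → X₀)
    (hTS : ∀ x : X₀, T ((S x : X₀) : X) = (x : X)) (x : X₀) (m k : ℕ) :
    (T ^ m) ((S^[m + k] x : X₀) : X) = ((S^[k] x : X₀) : X) := by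
  induction m with
  | zero => simp
  | succ m ih =>
    rw [pow_succ, mul_apply_eq_comp, show m + 1 + k = (m + k) + 1 by ring,
      Function.iterate_succ_apply', hTS, ih]

/-- Uniform geometric estimates. -/
theorem aux_unif {X : Type*} [NormedAddCommGroup X] [NormedSpace ℝ X]
    (T : X →L[ℝ] X) (X₀ : Set X) (S : X₀ → X₀) (α β : ℝ) (hαβ : α ≤ β)
    (hα : aT X₀ S < ENNReal.ofReal α) (hβ : ENNReal.ofReal β < bT T X₀) :
    0 < α ∧ ∃ w : ℝ, 0 < w ∧ w < 1 ∧ ∀ x : X₀, ∃ C : ℝ, 0 ≤ C ∧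
      ∀ l : ℝ, α ≤ l → l ≤ β → ∀ n : ℕ,
        (l⁻¹) ^ n * ‖((S^[n] x : X₀) : X)‖ ≤ C * (w ^ 4) ^ n ∧
        l ^ n * ‖(T ^ n) (x : X)‖ ≤ C * (w ^ 4) ^ n := by
  have hα0 : 0 < α := ENNReal.ofReal_pos.1 (lt_of_le_of_lt (zero_le) hα)
  have hβ0 : 0 < β := hα0.trans_le hαβ
  refine ⟨hα0, ?_⟩
  obtain ⟨r, hr1, hr2⟩ := ENNReal.lt_iff_exists_nnreal_btwn.1 hα
  obtain ⟨b, hb1, hb2⟩ := ENNReal.lt_iff_exists_nnreal_btwn.1 hβ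
  have hr0 : 0 < (r : ℝ) := by
    have : (0 : ℝ≥0∞) < r := lt_of_le_of_lt (zero_le) hr1
    exact_mod_cast this
  have hrα : (r : ℝ) < α := by
    rw [← ENNReal.ofReal_coe_nnreal] at hr2
    exact (ENNReal.ofReal_lt_ofReal_iff hα0).1 hr2
  have hβb : β < (b : ℝ) := by
    rw [← ENNReal.ofReal_coe_nnreal] at hb1
    exact ((ENNReal.ofReal_lt_ofReal_iff_of_nonneg hβ0.le).1 hb1)
  have hb0 : 0 < (b : ℝ) := hβ0.trans hβb
  set q : ℝ := max (r / α) (β / b) with hq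
  have hq0 : 0 < q := lt_max_of_lt_left (by positivity)
  have hq1 : q < 1 := max_lt ((div_lt_one hα0).2 hrα) ((div_lt_one hb0).2 hβb)
  have hw4 : (√(√q)) ^ 4 = q := by
    rw [show (4 : ℕ) = 2 * 2 by rfl, pow_mul, Real.sq_sqrt (by positivity), Real.sq_sqrt hq0.le]
  refine ⟨√(√q), by positivity, ?_, ?_⟩
  · rw [Real.sqrt_lt' one_pos, Real.sqrt_lt' (by norm_num)]; simpa using hq1
  intro x
  rw [hw4]
  obtain ⟨C₁, hC₁, h₁⟩ := aux_growth (fun n => ‖((S^[n] x : X₀) : X)‖₊) r hr0 (by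
    rw [ENNReal.ofReal_coe_nnreal]
    refine lt_of_le_of_lt ?_ hr1
    exact le_iSup (fun x : X₀ => Filter.limsup
      (fun n : ℕ => (‖((S^[n] x : X₀) : X)‖₊ : ℝ≥0∞) ^ (1 / (n : ℝ))) Filter.atTop) x)
  obtain ⟨C₂, hC₂, h₂⟩ := aux_growth (fun n => ‖(T ^ n) (x : X)‖₊) (b : ℝ)⁻¹ (by positivity) (by
    rw [ENNReal.ofReal_inv_of_pos hb0, ENNReal.ofReal_coe_nnreal]
    rw [← ENNReal.inv_lt_inv, inv_inv]
    refine lt_of_lt_of_le hb2 ?_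
    exact iInf_le (fun x : X₀ => (Filter.limsup
      (fun n : ℕ => (‖(T ^ n) (x : X)‖₊ : ℝ≥0∞) ^ (1 / (n : ℝ))) Filter.atTop)⁻¹) x)
  refine ⟨max C₁ C₂, le_max_of_le_left hC₁, ?_⟩
  intro l hl1 hl2 n
  have hl0 : 0 < l := hα0.trans_le hl1
  constructor
  · calc (l⁻¹) ^ n * ‖((S^[n] x : X₀) : X)‖ ≤ (α⁻¹) ^ n * (C₁ * (r : ℝ) ^ n) := by
          gcongr
          exact h₁ n
      _ = C₁ * (r / α) ^ n := by rw [div_eq_mul_inv, mul_pow]; ring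
      _ ≤ _ := by
          gcongr
          · exact le_max_left _ _
          · exact le_max_left _ _
  · calc l ^ n * ‖(T ^ n) (x : X)‖ ≤ β ^ n * (C₂ * ((b : ℝ)⁻¹) ^ n) := by
          gcongr
          exact h₂ n
      _ = C₂ * (β / b) ^ n := by rw [div_eq_mul_inv, mul_pow]; ring
      _ ≤ _ := by
          gcongr
          · exact le_max_right _ _
          · exact le_max_right _ _

theorem aux_ratio (α β w l l' : ℝ) (d m k : ℕ) (hα : 0 < α) (hw0 : 0 < w) (hw1 : w < 1)
    (hd : (β / α) * w ^ (d - 1) ≤ 1) (hl : α ≤ l ∧ l ≤ β) (hl' : α ≤ l' ∧ l' ≤ β)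
    (h : l = l' ∨ (d - 1) * m ≤ k) : (l / l') ^ m * w ^ k ≤ 1 := by
  have hl0 : 0 < l := hα.trans_le hl.1
  have hl0' : 0 < l' := hα.trans_le hl'.1
  rcases h with rfl | h
  · rw [div_self hl0.ne', one_pow, one_mul]
    exact pow_le_one₀ hw0.le hw1.le
  · have hR : l / l' ≤ β / α := by
      have : 0 < β := hl0.trans_le hl.2
      exact div_le_div₀ this.le hl.2 hα hl'.1
    calc (l / l') ^ m * w ^ k ≤ (β / α) ^ m * w ^ ((d - 1) * m) := by
          refine mul_le_mul (pow_le_pow_left₀ (by positivity) hR m)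
            (pow_le_pow_of_le_one hw0.le hw1.le h) (by positivity) ?_
          exact pow_nonneg ((by positivity : (0:ℝ) ≤ l / l').trans hR) _
      _ = ((β / α) * w ^ (d - 1)) ^ m := by rw [pow_mul, mul_pow]
      _ ≤ 1 := by
          refine pow_le_one₀ ?_ hd
          exact mul_nonneg ((by positivity : (0:ℝ) ≤ l / l').trans hR) (by positivity)

theorem aux_est {X : Type*} [NormedAddCommGroup X] [NormedSpace ℝ X]
    (T : X →L[ℝ] X) (X₀ : Set X) (S : X₀ → X₀)
    (hTS : ∀ x : X₀, T ((S x : X₀) : X) = (x : X)) (α β w l l' C : ℝ) (d m n : ℕ)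
    (hα : 0 < α) (hw0 : 0 < w) (hw1 : w < 1) (hC : 0 ≤ C)
    (hd : (β / α) * w ^ (d - 1) ≤ 1) (hl : α ≤ l ∧ l ≤ β) (hl' : α ≤ l' ∧ l' ≤ β)
    (y : X₀) (hy : ∀ l : ℝ, α ≤ l → l ≤ β → ∀ n : ℕ,
        (l⁻¹) ^ n * ‖((S^[n] y : X₀) : X)‖ ≤ C * (w ^ 4) ^ n ∧
        l ^ n * ‖(T ^ n) (y : X)‖ ≤ C * (w ^ 4) ^ n)
    (h : l = l' ∨ ((m ≤ n → d * m ≤ n) ∧ (n ≤ m → d * n ≤ m))) :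
    ‖((l • T) ^ m) ((l'⁻¹) ^ n • ((S^[n] y : X₀) : X))‖ ≤
      C * (w ^ 3) ^ ((n : ℤ) - m).natAbs := by
  have hl0 : 0 < l := hα.trans_le hl.1
  have hl0' : 0 < l' := hα.trans_le hl'.1
  have hnorm : ‖((l • T) ^ m) ((l'⁻¹) ^ n • ((S^[n] y : X₀) : X))‖ =
      l ^ m * (l'⁻¹) ^ n * ‖(T ^ m) ((S^[n] y : X₀) : X)‖ := by
    rw [smul_pow, ContinuousLinearMap.smul_apply, map_smul, norm_smul, norm_smul,
      Real.norm_of_nonneg (by positivity), Real.norm_of_nonneg (by positivity), mul_assoc]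
  rw [hnorm]
  have hfin : ∀ k : ℕ, ∀ A : ℝ, A * w ^ k ≤ 1 → A * (C * (w ^ 4) ^ k) ≤ C * (w ^ 3) ^ k := by
    intro k A hA
    have e : A * (C * (w ^ 4) ^ k) = (A * w ^ k) * (C * (w ^ 3) ^ k) := by
      rw [show w ^ 4 = w * w ^ 3 by ring, mul_pow]; ring
    rw [e]
    exact mul_le_of_le_one_left (by positivity) hA
  have hsub : ∀ a k : ℕ, d * a ≤ a + k → (d - 1) * a ≤ k := by
    intro a k hak
    rw [Nat.sub_mul, one_mul]; omega
  rcases le_total m n with hmn | hmn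
  · obtain ⟨k, rfl⟩ := Nat.exists_eq_add_of_le hmn
    rw [aux_iter T X₀ S hTS, show (((m + k : ℕ) : ℤ) - m).natAbs = k by omega]
    have e : l ^ m * (l'⁻¹) ^ (m + k) * ‖((S^[k] y : X₀) : X)‖ =
        (l / l') ^ m * ((l'⁻¹) ^ k * ‖((S^[k] y : X₀) : X)‖) := by
      rw [pow_add, div_eq_mul_inv, mul_pow]; ring
    rw [e]
    refine le_trans (mul_le_mul_of_nonneg_left (hy l' hl'.1 hl'.2 k).1 (by positivity)) ?_
    refine hfin k _ (aux_ratio α β w l l' d m k hα hw0 hw1 hd hl hl' ?_)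
    exact h.imp id fun h => hsub _ _ (h.1 hmn)
  · obtain ⟨k, rfl⟩ := Nat.exists_eq_add_of_le hmn
    have hit : (T ^ (n + k)) ((S^[n] y : X₀) : X) = (T ^ k) (y : X) := by
      rw [add_comm, pow_add, mul_apply_eq_comp]
      have := aux_iter T X₀ S hTS y n 0
      simp only [add_zero, Function.iterate_zero, id_eq] at this
      simp only [this]
    rw [hit, show ((n : ℤ) - (n + k : ℕ)).natAbs = k by omega]
    have e : l ^ (n + k) * (l'⁻¹) ^ n * ‖(T ^ k) (y : X)‖ =
        (l / l') ^ n * (l ^ k * ‖(T ^ k) (y : X)‖) := by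
      rw [pow_add, div_eq_mul_inv, mul_pow]; ring
    rw [e]
    refine le_trans (mul_le_mul_of_nonneg_left (hy l hl.1 hl.2 k).2 (by positivity)) ?_
    refine hfin k _ (aux_ratio α β w l l' d n k hα hw0 hw1 hd hl hl' ?_)
    exact h.imp id fun h => hsub _ _ (h.2 hmn)

theorem aux_summable (w : ℝ) (hw0 : 0 < w) (hw1 : w < 1) :
    Summable (fun k : ℤ => w ^ k.natAbs) := by
  refine Summable.of_nat_of_neg ?_ ?_
  · simpa using summable_geometric_of_lt_one hw0.le hw1
  · simpa using summable_geometric_of_lt_one hw0.le hw1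

/-- The core construction. -/
theorem aux_core {X : Type*} [NormedAddCommGroup X] [NormedSpace ℝ X] [CompleteSpace X]
    (T : X →L[ℝ] X) (X₀ : Set X) (S : X₀ → X₀)
    (hTS : ∀ x : X₀, T ((S x : X₀) : X) = (x : X)) (α β w : ℝ)
    (hα : 0 < α) (hw0 : 0 < w) (hw1 : w < 1)
    (hunif : ∀ x : X₀, ∃ C : ℝ, 0 ≤ C ∧
      ∀ l : ℝ, α ≤ l → l ≤ β → ∀ n : ℕ,
        (l⁻¹) ^ n * ‖((S^[n] x : X₀) : X)‖ ≤ C * (w ^ 4) ^ n ∧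
        l ^ n * ‖(T ^ n) (x : X)‖ ≤ C * (w ^ 4) ^ n)
    (μ : ℕ → ℝ) (hμ : ∀ i, α ≤ μ i ∧ μ i ≤ β) (y : ℕ → X₀) :
    ∃ x : X, ∃ c : ℕ, 2 ≤ c ∧ ∃ s : ℕ → ℕ, ∃ B : ℝ, 0 ≤ B ∧ ∀ i, ∀ m ∈ auxA c s i,
      ‖((μ i • T) ^ m) x - y i‖ ≤ w ^ i * B := by
  classical
  have hβα : 0 ≤ β / α := by
    have := (hμ 0).1.trans (hμ 0).2
    exact div_nonneg (hα.le.trans this) hα.le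
  -- choose d
  have htw : Tendsto (fun n : ℕ => w ^ n) atTop (𝓝 0) :=
    tendsto_pow_atTop_nhds_zero_of_lt_one hw0.le hw1
  have hsmall : ∀ K : ℝ, ∃ N : ℕ, ∀ n ≥ N, K * w ^ n ≤ 1 := by
    intro K
    have : Tendsto (fun n : ℕ => K * w ^ n) atTop (𝓝 0) := by simpa using htw.const_mul K
    exact eventually_atTop.1 (this.eventually_le_const one_pos)
  obtain ⟨d, hd2, hd⟩ : ∃ d : ℕ, 2 ≤ d ∧ (β / α) * w ^ (d - 1) ≤ 1 := by
    obtain ⟨N, hN⟩ := hsmall (β / α)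
    exact ⟨N + 2, by omega, hN _ (by omega)⟩
  choose C hC0 hC using hunif
  have hs : ∀ i, ∃ s : ℕ, i ≤ (2 * d) ^ s ∧ C (y i) * w ^ ((2 * d) ^ s) ≤ 1 := by
    intro i
    obtain ⟨N, hN⟩ := hsmall (C (y i))
    have hlt : ∀ n, n < (2 * d) ^ n := fun n => Nat.lt_pow_self (by omega)
    refine ⟨N + i, ?_, hN _ ?_⟩
    · have := hlt (N + i); omega
    · have := hlt (N + i); omega
  choose s hsi hsC using hs
  have hdisj : ∀ i j n, n ∈ auxA (2 * d) s i → n ∈ auxA (2 * d) s j → i = j := by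
    intro i j n hi hj
    by_contra hij
    have h1 := (auxA_diff d hd2 s i j n n hij hi hj le_rfl).2.1
    have : 0 < (2 * d) ^ s i := by positivity
    omega
  -- the terms
  let v : ℕ → X := fun n => if h : ∃ i, n ∈ auxA (2 * d) s i then
    ((μ h.choose)⁻¹) ^ n • ((S^[n] (y h.choose) : X₀) : X) else 0
  have hv : ∀ i, ∀ n ∈ auxA (2 * d) s i, v n = ((μ i)⁻¹) ^ n • ((S^[n] (y i) : X₀) : X) := by
    intro i n hn
    have h : ∃ i, n ∈ auxA (2 * d) s i := ⟨i, hn⟩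
    have e : h.choose = i := hdisj _ _ _ h.choose_spec hn
    simp only [v, dif_pos h, e]
  have hv0 : ∀ n, (¬ ∃ i, n ∈ auxA (2 * d) s i) → v n = 0 := fun n hn => dif_neg hn
  have hCw : ∀ i D, (2 * d) ^ s i ≤ D → C (y i) * (w ^ 3) ^ D ≤ w ^ D * w ^ D := by
    intro i D hD
    have h1 : C (y i) * w ^ D ≤ 1 :=
      le_trans (mul_le_mul_of_nonneg_left (pow_le_pow_of_le_one hw0.le hw1.le hD) (hC0 _)) (hsC i)
    have e : C (y i) * (w ^ 3) ^ D = (C (y i) * w ^ D) * (w ^ D * w ^ D) := by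
      rw [show w ^ 3 = w * w * w by ring, mul_pow, mul_pow]; ring
    rw [e]
    exact mul_le_of_le_one_left (by positivity) h1
  have hsum : Summable v := by
    refine Summable.of_norm_bounded (summable_geometric_of_lt_one hw0.le hw1) fun n => ?_
    by_cases h : ∃ i, n ∈ auxA (2 * d) s i
    · obtain ⟨i, hi⟩ := h
      rw [hv i n hi]
      have h1 := aux_est T X₀ S hTS α β w (μ i) (μ i) (C (y i)) d 0 n hα hw0 hw1 (hC0 _) hd
        (hμ i) (hμ i) (y i) (hC (y i)) (Or.inl rfl)
      simp only [pow_zero, one_apply_eq_self, Nat.cast_zero, sub_zero, Int.natAbs_natCast] at h1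
      refine h1.trans ((hCw i n (auxA_ge _ (by omega) s i n hi)).trans ?_)
      exact mul_le_of_le_one_left (by positivity) (pow_le_one₀ hw0.le hw1.le)
    · rw [hv0 n h, norm_zero]; positivity
  refine ⟨∑' n, v n, 2 * d, by omega, s, ∑' k : ℤ, w ^ k.natAbs,
    tsum_nonneg fun _ => by positivity, ?_⟩
  intro i m hm
  set L := (μ i • T) ^ m with hL
  have hμi : 0 < μ i := hα.trans_le (hμ i).1
  have hLm : L (v m) = y i := by
    rw [hv i m hm, hL, smul_pow, ContinuousLinearMap.smul_apply, map_smul]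
    have := aux_iter T X₀ S hTS (y i) m 0
    simp only [add_zero, Function.iterate_zero, id_eq] at this
    rw [this, smul_smul, ← mul_pow, mul_inv_cancel₀ hμi.ne', one_pow, one_smul]
  have hLs : Summable (fun n => L (v n)) := hsum.map L L.continuous
  have hLt : L (∑' n, v n) = ∑' n, L (v n) := L.map_tsum hsum
  rw [hLt, hLs.tsum_eq_add_tsum_ite m, hLm, add_sub_cancel_left]
  have hSz := aux_summable w hw0 hw1
  have hinj : Function.Injective (fun n : ℕ => (n : ℤ) - m) := by
    intro a b hab; simp only at hab; omega
  have hSn : Summable (fun n : ℕ => w ^ ((n : ℤ) - m).natAbs) := hSz.comp_injective hinj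
  have hle : ∑' n : ℕ, w ^ ((n : ℤ) - m).natAbs ≤ ∑' k : ℤ, w ^ k.natAbs :=
    hSn.tsum_le_tsum_of_inj (fun n : ℕ => (n : ℤ) - m) hinj
      (fun _ _ => by positivity) (fun _ => le_rfl) hSz
  refine le_trans ?_ (mul_le_mul_of_nonneg_left hle (by positivity))
  refine tsum_of_norm_bounded (hSn.hasSum.mul_left (w ^ i)) fun n => ?_
  by_cases hnm : n = m
  · rw [if_pos hnm, norm_zero]; positivity
  rw [if_neg hnm]
  by_cases h : ∃ j, n ∈ auxA (2 * d) s j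
  · obtain ⟨j, hj⟩ := h
    rw [hv j n hj]
    set D := ((n : ℤ) - m).natAbs with hD
    obtain ⟨hcond, hDi, hDj⟩ : (μ i = μ j ∨ ((m ≤ n → d * m ≤ n) ∧ (n ≤ m → d * n ≤ m))) ∧
        (2 * d) ^ s i ≤ D ∧ (2 * d) ^ s j ≤ D := by
      by_cases hij : i = j
      · subst hij
        rcases lt_or_gt_of_ne hnm with hlt | hlt
        · have := auxA_same (2 * d) s i m n hm hj hlt
          exact ⟨Or.inl rfl, by omega, by omega⟩
        · have := auxA_same (2 * d) s i n m hj hm hlt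
          exact ⟨Or.inl rfl, by omega, by omega⟩
      · rcases lt_or_gt_of_ne hnm with hlt | hlt
        · have := auxA_diff d hd2 s i j m n hij hm hj hlt.le
          exact ⟨Or.inr ⟨fun h => by omega, fun _ => this.1⟩, by omega, by omega⟩
        · have := auxA_diff d hd2 s j i n m (Ne.symm hij) hj hm hlt.le
          exact ⟨Or.inr ⟨fun _ => this.1, fun h => by omega⟩, by omega, by omega⟩
    refine (aux_est T X₀ S hTS α β w (μ i) (μ j) (C (y j)) d m n hα hw0 hw1 (hC0 _) hd
        (hμ i) (hμ j) (y j) (hC (y j)) hcond).trans ((hCw j D hDj).trans ?_)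
    exact mul_le_mul_of_nonneg_right
      (pow_le_pow_of_le_one hw0.le hw1.le ((hsi i).trans hDi)) (by positivity)
  · rw [hv0 n h, map_zero, norm_zero]; positivity

/-- Theorem 2.11: if `Λ` is a countable relatively compact nonempty subset of
`(a_T(X₀,S), b_T(X₀,S))`, then the multiples `λT`, `λ ∈ Λ`, share a common
frequently hypercyclic vector. -/
theorem stmt4 {X : Type*} [NormedAddCommGroup X] [NormedSpace ℝ X]
    [CompleteSpace X] [TopologicalSpace.SeparableSpace X]
    (T : X →L[ℝ] X) (X₀ : Set X) (hX₀ : Dense X₀) (S : X₀ → X₀)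
    (hTS : ∀ x : X₀, T ((S x : X₀) : X) = (x : X))
    (Λ : Set ℝ) (hne : Λ.Nonempty) (hcount : Λ.Countable)
    (hcomp : IsCompact (closure Λ))
    (hsub : closure Λ ⊆ {l : ℝ | aT X₀ S < ENNReal.ofReal l ∧ ENNReal.ofReal l < bT T X₀}) :
    ∃ x : X, ∀ l ∈ Λ, x ∈ FHC (l • T) := by
  classical
  have hcne : (closure Λ).Nonempty := hne.closure
  obtain ⟨α, hαm, hαl⟩ := hcomp.exists_isLeast hcne
  obtain ⟨β, hβm, hβl⟩ := hcomp.exists_isGreatest hcne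
  obtain ⟨hα, w, hw0, hw1, hunif⟩ := aux_unif T X₀ S α β (hαl hβm) (hsub hαm).1 (hsub hβm).2
  obtain ⟨l, hl⟩ := hcount.exists_eq_range hne
  have : SecondCountableTopology X := UniformSpace.secondCountable_of_separable X
  have : Nonempty X₀ := hX₀.nonempty.to_subtype
  let z : ℕ → X₀ := TopologicalSpace.denseSeq X₀
  have hz : DenseRange z := TopologicalSpace.denseRange_denseSeq X₀
  let μ : ℕ → ℝ := fun i => l (Nat.unpair (Nat.unpair i).2).1
  let y : ℕ → X₀ := fun i => z (Nat.unpair (Nat.unpair i).2).2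
  have hlm : ∀ j, l j ∈ closure Λ := fun j => subset_closure (hl ▸ Set.mem_range_self j)
  obtain ⟨x, c, hc, s, B, hB, hx⟩ := aux_core T X₀ S hTS α β w hα hw0 hw1 hunif μ
    (fun i => ⟨hαl (hlm _), hβl (hlm _)⟩) y
  refine ⟨x, fun t ht U hU hUne => ?_⟩
  rw [hl] at ht
  obtain ⟨j, rfl⟩ := ht
  -- a point of the dense sequence in U
  have hV : IsOpen ((Subtype.val : X₀ → X) ⁻¹' U) := hU.preimage continuous_subtype_val
  obtain ⟨p, hpU, hp0⟩ := hX₀.inter_open_nonempty U hU hUne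
  obtain ⟨k, hk⟩ := hz.exists_mem_open hV ⟨⟨p, hp0⟩, hpU⟩
  obtain ⟨ε, hε, hball⟩ := Metric.isOpen_iff.1 hU _ hk
  have htend : Tendsto (fun n : ℕ => w ^ n * B) atTop (𝓝 0) := by
    simpa using (tendsto_pow_atTop_nhds_zero_of_lt_one hw0.le hw1).mul_const B
  obtain ⟨N, hN⟩ := eventually_atTop.1 (htend.eventually_lt_const hε)
  set i := Nat.pair N (Nat.pair j k) with hi
  have hiN : N ≤ i := Nat.left_le_pair _ _
  have hμi : μ i = l j := by simp [μ, hi]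
  have hyi : y i = z k := by simp [y, hi]
  obtain ⟨δ, hδ, hden⟩ := auxA_density c hc s i
  refine aux_lowerDensity_pos (E := auxA c s i) ?_ δ hδ hden
  intro m hm
  have h1 := hx i m hm
  rw [hμi, hyi] at h1
  exact hball (mem_ball_iff_norm.2 (h1.trans_lt (hN i hiN)))
end

section
/- Fix 1 ≤ p < ∞ and let w(i) = (w_n(i))_{n≥1}, i ∈ ℕ, be countably many bounded sequences of nonzero scalars, so that every weighted backward shift B_{w(i)} is a bounded operator on ℓ^p(ℕ). Assume there exist a sequence ω = (ω_n)_{n≥1} of nonzero scalars, constants M ≥ 1 and 0 < η ≤ 1 with either M = η = 1 or (M ≠ 1 and η ≠ 1), and a constant C > 0, such that for every i ∈ ℕ, n ≥ 1 and m ≥ 1: (i) ∑_{k≥1} |ω_1 ⋯ ω_k|^{−p} < ∞; (ii) |ω_n ⋯ ω_{n+m}| ≤ C η^m |w_n(i) ⋯ w_{n+m}(i)|; (iii) C^{−1} M^{−m} ≤ |w_n(i) ⋯ w_{n+m}(i)| ≤ C M^m. Then there exists a common frequently hypercyclic vector for the family (B_{w(i)})_{i∈ℕ}. -/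
open Filter Topology
open scoped ENNReal NNReal

theorem aux_density (A E : Set ℕ) (hAE : A ⊆ E) (c : ℝ) (hc : 0 < c)
    (h : ∀ᶠ n : ℕ in atTop, c * ((n : ℝ) + 1) ≤
      ∑ k ∈ Finset.range (n + 1), Set.indicator A (fun _ => (1 : ℝ)) k) :
    0 < lowerDensity E := by
  refine lt_of_lt_of_le hc ?_
  unfold lowerDensity
  refine le_liminf_of_le ?_ ?_
  · refine IsBoundedUnder.isCoboundedUnder_ge ⟨1, ?_⟩
    refine Filter.eventually_map.2 (Eventually.of_forall fun n => ?_)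
    have hn : (0 : ℝ) < (n : ℝ) + 1 := by positivity
    show _ / ((n : ℝ) + 1) ≤ 1
    rw [div_le_one hn]
    calc ∑ k ∈ Finset.range (n + 1), Set.indicator E (fun _ => (1 : ℝ)) k
        ≤ ∑ k ∈ Finset.range (n + 1), (1 : ℝ) := by
          refine Finset.sum_le_sum fun k _ => ?_
          exact Set.indicator_le_self' (fun _ _ => zero_le_one) k
      _ = (n : ℝ) + 1 := by simp
  · filter_upwards [h] with n hn
    have hnz : (0 : ℝ) < (n : ℝ) + 1 := by positivity
    rw [le_div_iff₀ hnz]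
    refine hn.trans (Finset.sum_le_sum fun k _ => ?_)
    exact Set.indicator_le_indicator_of_subset hAE (fun _ => zero_le_one) k

theorem aux_h (a : ℕ → ℝ) (ha : ∀ n, 0 < a n) (hs : Summable a) :
    ∃ h : ℕ → ℝ, Monotone h ∧ Tendsto h atTop atTop ∧ (∀ n, 0 ≤ h n) ∧
      Summable (fun n => h n * a n) := by
  set R : ℕ → ℝ := fun n => ∑' k, a (k + n) with hR
  have hsn : ∀ n, Summable (fun k => a (k + n)) := fun n => (summable_nat_add_iff n).2 hs
  have hRpos : ∀ n, 0 < R n := fun n =>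
    (hsn n).tsum_pos (fun k => (ha _).le) 0 (ha _)
  have hRs : ∀ n, R n = a n + R (n + 1) := by
    intro n
    have := (hsn n).tsum_eq_zero_add
    simp only [hR]
    rw [this]
    simp only [zero_add]
    congr 1
    refine tsum_congr fun k => ?_
    congr 1
    omega
  have hanti : Antitone R := antitone_nat_of_succ_le fun n => by
    have := hRs n; have := ha n; linarith
  have hlim : Tendsto R atTop (𝓝 0) := tendsto_sum_nat_add a
  refine ⟨fun n => (√(R n))⁻¹, ?_, ?_, ?_, ?_⟩
  · intro m n hmn
    exact inv_anti₀ (Real.sqrt_pos.2 (hRpos n)) (Real.sqrt_le_sqrt (hanti hmn))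
  · have h1 : Tendsto (fun n => √(R n)) atTop (𝓝 0) := by
      have := (Real.continuous_sqrt.tendsto 0).comp hlim
      rw [Real.sqrt_zero] at this
      exact this
    refine Tendsto.comp tendsto_inv_nhdsGT_zero (tendsto_nhdsWithin_iff.2 ⟨h1, ?_⟩)
    exact Eventually.of_forall fun n => Real.sqrt_pos.2 (hRpos n)
  · intro n; positivity
  · have key : ∀ n, (√(R n))⁻¹ * a n ≤ 2 * √(R n) - 2 * √(R (n+1)) := by
      intro n
      have h0 := Real.sqrt_pos.2 (hRpos n)
      have h1 := Real.sqrt_pos.2 (hRpos (n+1))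
      have h2 : √(R (n+1)) ≤ √(R n) := Real.sqrt_le_sqrt (hanti (Nat.le_succ n))
      have e0 := Real.mul_self_sqrt (hRpos n).le
      have e1 := Real.mul_self_sqrt (hRpos (n+1)).le
      have e2 : a n = R n - R (n+1) := by have := hRs n; linarith
      rw [inv_mul_le_iff₀ h0, e2]
      nlinarith
    refine summable_of_sum_range_le (c := 2 * √(R 0)) (fun n => ?_) (fun n => ?_)
    · have := ha n; positivity
    · have : ∀ n, ∑ i ∈ Finset.range n, (√(R i))⁻¹ * a i ≤ 2 * √(R 0) - 2 * √(R n) := by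
        intro n
        induction n with
        | zero => simp
        | succ n ih => rw [Finset.sum_range_succ]; have := key n; linarith
      have h1 := this n
      have h2 := Real.sqrt_nonneg (R n)
      linarith

theorem aux_sets (N : ℕ → ℕ) (hN : ∀ s, 1 ≤ N s) (κ : ℕ) : ∃ A : ℕ → Set ℕ,
    (∀ s, ∀ n ∈ A s, N s ≤ n) ∧
    (∀ r s n m, n ∈ A r → m ∈ A s → n < m →
      N r ≤ m - n ∧ N s ≤ m - n ∧ (r ≠ s → κ * n ≤ m - n)) ∧
    (∀ r s n, n ∈ A r → n ∈ A s → r = s) ∧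
    ∀ s, ∃ c : ℝ, 0 < c ∧ ∀ᶠ n : ℕ in atTop, c * ((n : ℝ) + 1) ≤
      ∑ k ∈ Finset.range (n + 1), Set.indicator (A s) (fun _ => (1 : ℝ)) k := by
  obtain ⟨a, ha4, haκ⟩ : ∃ a : ℕ, 4 ≤ a ∧ 2 * κ + 2 ≤ a := ⟨2 * κ + 4, by omega, by omega⟩
  have hblock : ∀ k kz, k < kz → a * a ^ k ≤ a ^ kz := by
    intro k kz h
    rw [← pow_succ']
    exact Nat.pow_le_pow_right (by omega) h
  have hapos : ∀ k, 0 < a ^ k := fun k => Nat.pow_pos (by omega)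
  refine ⟨fun s => {n | N s ∣ n ∧ ∃ k, padicValNat 2 k = s ∧ 2 * N s ≤ a ^ k ∧
    a ^ k ≤ n ∧ n ≤ 2 * a ^ k}, ?_, ?_, ?_, ?_⟩
  · rintro s n ⟨_, k, _, h1, h2, _⟩
    omega
  · rintro r s n m ⟨hdn, k, hk, h1, h2, h3⟩ ⟨hdm, kz, hkz, hz1, hz2, hz3⟩ hnm
    rcases lt_trichotomy k kz with hlt | heq | hgt
    · have hb := hblock k kz hlt
      have hp := hapos k
      have e1 : 4 * a ^ k ≤ a * a ^ k := Nat.mul_le_mul_right _ ha4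
      have e2 : (2 * κ + 2) * a ^ k ≤ a * a ^ k := Nat.mul_le_mul_right _ haκ
      have e3 : κ * n ≤ κ * (2 * a ^ k) := Nat.mul_le_mul_left _ h3
      have e4 : (2 * κ + 2) * a ^ k = κ * (2 * a ^ k) + 2 * a ^ k := by ring
      refine ⟨by omega, by omega, fun _ => by omega⟩
    · subst heq
      have hrs : r = s := hk.symm.trans hkz
      subst hrs
      have hd : N r ∣ m - n := Nat.dvd_sub hdm hdn
      have := Nat.le_of_dvd (by omega) hd
      exact ⟨this, this, fun h => absurd rfl h⟩
    · have hb := hblock kz k hgt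
      have e1 : 4 * a ^ kz ≤ a * a ^ kz := Nat.mul_le_mul_right _ ha4
      have := hapos kz
      omega
  · rintro r s n ⟨hdn, k, hk, h1, h2, h3⟩ ⟨hdm, kz, hkz, hz1, hz2, hz3⟩
    rcases lt_trichotomy k kz with hlt | heq | hgt
    · have hb := hblock k kz hlt
      have e1 : 4 * a ^ k ≤ a * a ^ k := Nat.mul_le_mul_right _ ha4
      have := hapos k
      omega
    · subst heq
      exact hk.symm.trans hkz
    · have hb := hblock kz k hgt
      have e1 : 4 * a ^ kz ≤ a * a ^ kz := Nat.mul_le_mul_right _ ha4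
      have := hapos kz
      omega
  · intro s
    set A : Set ℕ := {n | N s ∣ n ∧ ∃ k, padicValNat 2 k = s ∧ 2 * N s ≤ a ^ k ∧
      a ^ k ≤ n ∧ n ≤ 2 * a ^ k} with hA
    set P : ℕ := 2 ^ (s + 1) with hP
    have hNs := hN s
    have haR : (0 : ℝ) < a := by exact_mod_cast (show 0 < a by omega)
    have hNR : (0 : ℝ) < N s := by exact_mod_cast (show 0 < N s by omega)
    refine ⟨1 / (2 * N s * (a : ℝ) ^ (P + 2)), by positivity, ?_⟩
    filter_upwards [eventually_ge_atTop (a ^ (2 * N s + P + 2))] with n hn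
    have hn0 : n ≠ 0 := by have := hapos (2 * N s + P + 2); omega
    set L := Nat.log a n with hL
    have hL1 : a ^ L ≤ n := Nat.pow_log_le_self a hn0
    have hL2 : n < a ^ (L + 1) := Nat.lt_pow_succ_log_self (by omega) n
    have hL3 : 2 * N s + P + 2 ≤ L := Nat.le_log_of_pow_le (by omega) hn
    -- find k
    obtain ⟨k, hk, hk1, hk2⟩ : ∃ k, padicValNat 2 k = s ∧ L ≤ k + P + 1 ∧ k + 1 ≤ L := by
      have hPpos : 0 < P := by positivity
      set l := (L - 1 - 2 ^ s) / P with hl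
      have hP2 : P = 2 * 2 ^ s := by rw [hP, pow_succ]; ring
      have hdm := Nat.div_add_mod (L - 1 - 2 ^ s) P
      have hml := Nat.mod_lt (L - 1 - 2 ^ s) hPpos
      rw [← hl] at hdm
      refine ⟨2 ^ s * (2 * l + 1), ?_, ?_, ?_⟩
      · rw [padicValNat.mul (by positivity) (by omega), padicValNat.prime_pow,
          padicValNat.eq_zero_of_not_dvd (by omega)]
        rfl
      · have : 2 ^ s * (2 * l + 1) = P * l + 2 ^ s := by rw [hP2]; ring
        omega
      · have : 2 ^ s * (2 * l + 1) = P * l + 2 ^ s := by rw [hP2]; ring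
        omega
    have hkN : 2 * N s ≤ a ^ k := by
      have h1 : 2 * N s ≤ k := by omega
      exact h1.trans (Nat.lt_pow_self (by omega)).le
    have hkn : 2 * a ^ k ≤ n := by
      have := hblock k L (by omega)
      have e1 : 4 * a ^ k ≤ a * a ^ k := Nat.mul_le_mul_right _ ha4
      omega
    -- count
    set J := a ^ k / N s with hJ
    have hJ1 := Nat.div_add_mod (a ^ k) (N s)
    have hJ2 := Nat.mod_lt (a ^ k) (show 0 < N s by omega)
    rw [← hJ] at hJ1
    have hcount : (J : ℝ) ≤
        ∑ k ∈ Finset.range (n + 1), Set.indicator A (fun _ => (1 : ℝ)) k := by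
      set F : Finset ℕ := (Finset.range J).image (fun j => N s * (J + 1 + j)) with hF
      have hFc : F.card = J := by
        rw [hF, Finset.card_image_of_injective, Finset.card_range]
        intro x y hxy
        have := Nat.eq_of_mul_eq_mul_left (by omega) hxy
        omega
      have hmem : ∀ x ∈ F, x ∈ A ∧ x < n + 1 := by
        intro x hx
        rw [hF, Finset.mem_image] at hx
        obtain ⟨j, hj, rfl⟩ := hx
        rw [Finset.mem_range] at hj
        have e1 : N s * (J + 1 + j) = N s * J + N s + N s * j := by ring
        have e2 : N s * (j + 1) ≤ N s * J := Nat.mul_le_mul_left _ hj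
        have e3 : N s * (j + 1) = N s * j + N s := by ring
        exact ⟨⟨Dvd.intro _ rfl, k, hk, hkN, by omega, by omega⟩, by omega⟩
      have hsub : F ⊆ Finset.range (n + 1) := fun x hx => Finset.mem_range.2 (hmem x hx).2
      calc (J : ℝ) = ∑ x ∈ F, (1 : ℝ) := by simp [hFc]
        _ = ∑ x ∈ F, Set.indicator A (fun _ => (1 : ℝ)) x :=
            Finset.sum_congr rfl fun x hx => by
              rw [Set.indicator_of_mem (hmem x hx).1]
        _ ≤ _ := Finset.sum_le_sum_of_subset_of_nonneg hsub fun x _ _ =>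
            Set.indicator_nonneg (fun _ _ => zero_le_one) x
    refine le_trans ?_ hcount
    have hJ3 : a ^ k ≤ 2 * N s * J := by
      have e : 2 * N s * J = 2 * (N s * J) := by ring
      omega
    have hJ4 : n + 1 ≤ 2 * N s * J * a ^ (P + 2) := by
      calc n + 1 ≤ a ^ (L + 1) := hL2
        _ ≤ a ^ (k + (P + 2)) := Nat.pow_le_pow_right (by omega) (by omega)
        _ = a ^ k * a ^ (P + 2) := pow_add _ _ _
        _ ≤ _ := Nat.mul_le_mul_right _ hJ3
    have hJ5 : (n : ℝ) + 1 ≤ 2 * N s * J * (a : ℝ) ^ (P + 2) := by exact_mod_cast hJ4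
    rw [one_div, inv_mul_le_iff₀ (by positivity)]
    linarith

theorem aux_key (w : ℕ → ℕ → ℂ) (hw0 : ∀ i n : ℕ, 1 ≤ n → w i n ≠ 0)
    (ω : ℕ → ℂ) (hω0 : ∀ n : ℕ, 1 ≤ n → ω n ≠ 0)
    (M η C : ℝ) (hM : 1 ≤ M) (hη0 : 0 < η) (hη1 : η ≤ 1) (hC : 0 < C)
    (hii : ∀ i n m : ℕ, 1 ≤ n → 1 ≤ m →
      ∏ j ∈ Finset.Icc n (n + m), ‖ω j‖ ≤
        C * η ^ m * ∏ j ∈ Finset.Icc n (n + m), ‖w i j‖)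
    (hiii : ∀ i n m : ℕ, 1 ≤ n → 1 ≤ m →
      C⁻¹ / M ^ m ≤ ∏ j ∈ Finset.Icc n (n + m), ‖w i j‖ ∧
        ∏ j ∈ Finset.Icc n (n + m), ‖w i j‖ ≤ C * M ^ m)
    (κ : ℕ) (hκ : η ^ κ * M ^ 2 ≤ 1) (i j t u n : ℕ) (htu : t + 2 ≤ u)
    (h : i = j ∨ (2 ≤ n ∧ κ * n ≤ u - t)) :
    (∏ l ∈ Finset.Ico (u + 1) (u + n + 1), ‖w i l‖) /
      (∏ l ∈ Finset.Ico (t + 1) (u + n + 1), ‖w j l‖) ≤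
      C * (1 + C ^ 2) / η * (∏ l ∈ Finset.Icc 1 t, ‖ω l‖) / (∏ l ∈ Finset.Icc 1 u, ‖ω l‖) := by
  have hIcc : ∀ a b : ℕ, Finset.Icc a b = Finset.Ico a (b + 1) := by
    intro a b; ext x; simp
  have wpos : ∀ i a b, 0 < ∏ l ∈ Finset.Ico (a + 1) b, ‖w i l‖ := by
    intro i a b
    refine Finset.prod_pos fun l hl => norm_pos_iff.2 (hw0 i l ?_)
    have := (Finset.mem_Ico.1 hl).1; omega
  have opos : ∀ a b, 0 < ∏ l ∈ Finset.Ico (a + 1) b, ‖ω l‖ := by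
    intro a b
    refine Finset.prod_pos fun l hl => norm_pos_iff.2 (hω0 l ?_)
    have := (Finset.mem_Ico.1 hl).1; omega
  simp only [hIcc] at *
  rw [← Finset.prod_Ico_consecutive (fun l => ‖w j l‖) (show t + 1 ≤ u + 1 by omega)
    (show u + 1 ≤ u + n + 1 by omega)]
  rw [← Finset.prod_Ico_consecutive (fun l => ‖ω l‖) (show 1 ≤ t + 1 by omega)
    (show t + 1 ≤ u + 1 by omega)]
  have h2 := hii j (t + 1) (u - t - 1) (by omega) (by omega)
  rw [show t + 1 + (u - t - 1) + 1 = u + 1 by omega] at h2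
  set X := ∏ l ∈ Finset.Ico (u + 1) (u + n + 1), ‖w i l‖ with hX
  set Y := ∏ l ∈ Finset.Ico (u + 1) (u + n + 1), ‖w j l‖ with hY
  set Z := ∏ l ∈ Finset.Ico (t + 1) (u + 1), ‖w j l‖ with hZ
  set O := ∏ l ∈ Finset.Ico (t + 1) (u + 1), ‖ω l‖ with hO
  set T := ∏ l ∈ Finset.Ico 1 (t + 1), ‖ω l‖ with hT
  have pX : 0 < X := wpos _ _ _
  have pY : 0 < Y := wpos _ _ _
  have pZ : 0 < Z := wpos _ _ _
  have pO : 0 < O := opos _ _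
  have pT : 0 < T := opos 0 _
  have hηp : η ^ (u - t) = η * η ^ (u - t - 1) := by
    rw [← pow_succ']; congr 1; omega
  have hratio : X * η ^ (u - t) ≤ (1 + C ^ 2) * Y := by
    rcases h with rfl | ⟨hn, hκn⟩
    · have : η ^ (u - t) ≤ 1 := pow_le_one₀ hη0.le hη1
      have hXY : X = Y := rfl
      rw [← hXY]
      nlinarith [sq_nonneg C]
    · have b1 := (hiii i (u + 1) (n - 1) (by omega) (by omega)).2
      have b2 := (hiii j (u + 1) (n - 1) (by omega) (by omega)).1
      rw [show u + 1 + (n - 1) + 1 = u + n + 1 by omega] at b1 b2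
      rw [← hX] at b1
      rw [← hY] at b2
      have hMp : (0 : ℝ) < M := by linarith
      have c1 : M ^ (n - 1) ≤ M ^ n := pow_le_pow_right₀ hM (by omega)
      have c2 : η ^ (u - t) ≤ η ^ (κ * n) := pow_le_pow_of_le_one hη0.le hη1 hκn
      have c3 : η ^ (κ * n) * (M ^ n * M ^ n) ≤ 1 := by
        have : η ^ (κ * n) * (M ^ n * M ^ n) = (η ^ κ * M ^ 2) ^ n := by
          rw [mul_pow, ← pow_mul, ← pow_mul, ← pow_add]; congr 2; ring
        rw [this]
        exact pow_le_one₀ (by positivity) hκ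
      have d1 : X ≤ C * M ^ n := b1.trans (by gcongr)
      have d2 : 1 ≤ C * M ^ n * Y := by
        have : C⁻¹ / M ^ n ≤ Y := le_trans (by gcongr) b2
        rw [div_le_iff₀ (by positivity), inv_le_iff_one_le_mul₀ hC] at this
        linarith
      calc X * η ^ (u - t) ≤ (C * M ^ n) * η ^ (κ * n) := by gcongr
        _ ≤ (C * M ^ n) * η ^ (κ * n) * (C * M ^ n * Y) :=
            le_mul_of_one_le_right (by positivity) d2
        _ = C ^ 2 * Y * (η ^ (κ * n) * (M ^ n * M ^ n)) := by ring
        _ ≤ C ^ 2 * Y * 1 := by gcongr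
        _ ≤ (1 + C ^ 2) * Y := by linarith
  have e : C * (1 + C ^ 2) / η * T / (T * O) = C * (1 + C ^ 2) / (η * O) := by
    field_simp
  rw [e, div_le_div_iff₀ (by positivity) (by positivity)]
  calc X * (η * O) ≤ X * (η * (C * η ^ (u - t - 1) * Z)) := by gcongr
    _ = (X * η ^ (u - t)) * (C * Z) := by rw [hηp]; ring
    _ ≤ ((1 + C ^ 2) * Y) * (C * Z) := by gcongr
    _ = C * (1 + C ^ 2) * (Z * Y) := by ring

theorem aux_iter_s8 (p : ℝ≥0∞) [Fact (1 ≤ p)] (w : ℕ → ℂ)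
    (B : lp (fun _ : ℕ => ℂ) p →L[ℂ] lp (fun _ : ℕ => ℂ) p)
    (hB : ∀ x : lp (fun _ : ℕ => ℂ) p, ∀ n : ℕ, (B x) n = w (n + 1) * x (n + 1))
    (x : lp (fun _ : ℕ => ℂ) p) (n u : ℕ) :
    ((B ^ n) x) u = (∏ l ∈ Finset.Ico (u + 1) (u + n + 1), w l) * x (u + n) := by
  induction n generalizing u with
  | zero => simp
  | succ n ih =>
    rw [pow_succ', mul_apply_eq_comp, hB, ih,
      Finset.prod_eq_prod_Ico_succ_bot (show u + 1 < u + (n + 1) + 1 by omega),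
      show u + 1 + n = u + (n + 1) by omega, mul_assoc]

theorem aux_dense (p : ℝ≥0∞) [Fact (1 ≤ p)] (hp : p ≠ ⊤)
    (U : Set (lp (fun _ : ℕ => ℂ) p)) (hU : IsOpen U) (hne : U.Nonempty) :
    ∃ n l : ℕ, (∑ t : Fin n, lp.single p (t : ℕ) (TopologicalSpace.denseSeq (Fin n → ℂ) l t)) ∈ U := by
  obtain ⟨f, hf⟩ := hne
  have h1 := (lp.hasSum_single hp f).tendsto_sum_nat
  obtain ⟨n, hn⟩ := (h1.eventually (hU.mem_nhds hf)).exists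
  have hcont : Continuous (fun c : Fin n → ℂ =>
      ∑ t : Fin n, (lp.single p (t : ℕ) (c t) : lp (fun _ : ℕ => ℂ) p)) := by
    refine continuous_finsetSum _ fun t _ => ?_
    exact (lp.isometry_single (E := fun _ : ℕ => ℂ) (p := p) (t : ℕ)).continuous.comp (continuous_apply t)
  have hV := hU.preimage hcont
  obtain ⟨l, hl⟩ := (TopologicalSpace.denseRange_denseSeq (Fin n → ℂ)).exists_mem_open hV
    ⟨fun t => f t, by
      show _ ∈ U
      rw [Finset.sum_range] at hn
      exact hn⟩
  exact ⟨n, l, hl⟩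

theorem aux_dense_seq (p : ℝ≥0∞) [Fact (1 ≤ p)] (hp : p ≠ ⊤) :
    ∃ (y : ℕ → lp (fun _ : ℕ => ℂ) p) (q : ℕ → ℕ), (∀ l u, q l ≤ u → y l u = 0) ∧
      ∀ U : Set (lp (fun _ : ℕ => ℂ) p), IsOpen U → U.Nonempty → ∃ l, y l ∈ U := by
  refine ⟨fun s => ∑ t : Fin s.unpair.1, lp.single p (t : ℕ)
    (TopologicalSpace.denseSeq (Fin s.unpair.1 → ℂ) s.unpair.2 t), fun s => s.unpair.1, ?_, ?_⟩
  · intro s u hu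
    rw [lp.coeFn_sum, Finset.sum_apply]
    refine Finset.sum_eq_zero fun t _ => ?_
    refine lp.single_apply_ne (E := fun _ : ℕ => ℂ) p (t : ℕ) _ ?_
    have h2 := t.2
    have h3 : s.unpair.1 ≤ u := hu
    omega
  · intro U hU hne
    obtain ⟨n, l, h⟩ := aux_dense p hp U hU hne
    refine ⟨Nat.pair n l, ?_⟩
    beta_reduce
    rw [Nat.unpair_pair]
    exact h

theorem aux_x (w : ℕ → ℕ → ℂ) (A : ℕ → Set ℕ) (N q : ℕ → ℕ) (hq : ∀ s, q s ≤ N s)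
    (y : ℕ → ℕ → ℂ)
    (hsep : ∀ r s n m, n ∈ A r → m ∈ A s → n < m → N r ≤ m - n)
    (hdis : ∀ r s n, n ∈ A r → n ∈ A s → r = s) :
    ∃ X : ℕ → ℂ,
      (∀ s, ∀ m ∈ A s, ∀ t < q s, X (m + t) =
        y s t / ∏ l ∈ Finset.Ico (t + 1) (m + t + 1), w s l) ∧
      (∀ k, X k ≠ 0 → ∃ s, ∃ m ∈ A s, ∃ t < q s, k = m + t) := by
  classical
  let R : ℕ → Prop := fun k => ∃ z : ℕ × ℕ × ℕ, z.2.1 ∈ A z.1 ∧ z.2.2 < q z.1 ∧ k = z.2.1 + z.2.2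
  refine ⟨fun k => if h : R k then y h.choose.1 h.choose.2.2 /
    ∏ l ∈ Finset.Ico (h.choose.2.2 + 1) (k + 1), w h.choose.1 l else 0, ?_, ?_⟩
  · intro s m hm t ht
    have hR : R (m + t) := ⟨(s, m, t), hm, ht, rfl⟩
    simp only [dif_pos hR]
    obtain ⟨h1, h2, h3⟩ := hR.choose_spec
    set z := hR.choose with hz
    have hmz : z.2.1 = m := by
      have q1 := hq s
      have q2 := hq z.1
      rcases lt_trichotomy z.2.1 m with h | h | h
      · have := hsep _ _ _ _ h1 hm h
        omega
      · exact h
      · have := hsep _ _ _ _ hm h1 h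
        omega
    have hs : z.1 = s := hdis _ _ _ h1 (hmz ▸ hm)
    have htz : z.2.2 = t := by omega
    rw [hs, htz]
  · intro k hk
    by_cases h : R k
    · obtain ⟨z, h1, h2, h3⟩ := h
      exact ⟨z.1, z.2.1, h1, z.2.2, h2, h3⟩
    · simp [h] at hk

/-- Theorem 2.18 (common frequent hypercyclicity for countably many weighted shifts
on `ℓ^p(ℕ)`, `1 ≤ p < ∞`). The weighted backward shift `B_{w(i)}` is encoded as the
bounded operator `B i` whose action is `(B i x) n = w i (n+1) * x (n+1)`. -/
theorem stmt8 (p : ℝ≥0∞) [Fact (1 ≤ p)] (hp : p ≠ ⊤)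
    (w : ℕ → ℕ → ℂ) (hw0 : ∀ i n : ℕ, 1 ≤ n → w i n ≠ 0)
    (hwbdd : ∀ i : ℕ, ∃ A : ℝ, ∀ n : ℕ, ‖w i n‖ ≤ A)
    (B : ℕ → lp (fun _ : ℕ => ℂ) p →L[ℂ] lp (fun _ : ℕ => ℂ) p)
    (hB : ∀ i : ℕ, ∀ x : lp (fun _ : ℕ => ℂ) p, ∀ n : ℕ,
      (B i x) n = w i (n + 1) * x (n + 1))
    (ω : ℕ → ℂ) (hω0 : ∀ n : ℕ, 1 ≤ n → ω n ≠ 0)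
    (M η C : ℝ) (hM : 1 ≤ M) (hη0 : 0 < η) (hη1 : η ≤ 1)
    (hMη : (M = 1 ∧ η = 1) ∨ (M ≠ 1 ∧ η ≠ 1)) (hC : 0 < C)
    -- (i) ∑_{k≥1} |ω₁⋯ω_k|^{-p} < ∞
    (hi : Summable (fun k : ℕ => (∏ j ∈ Finset.Icc 1 k, ‖ω j‖) ^ (-(p.toReal))))
    -- (ii) |ω_n⋯ω_{n+m}| ≤ C η^m |w_n(i)⋯w_{n+m}(i)|
    (hii : ∀ i n m : ℕ, 1 ≤ n → 1 ≤ m →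
      ∏ j ∈ Finset.Icc n (n + m), ‖ω j‖ ≤
        C * η ^ m * ∏ j ∈ Finset.Icc n (n + m), ‖w i j‖)
    -- (iii) C⁻¹ M^{-m} ≤ |w_n(i)⋯w_{n+m}(i)| ≤ C M^m
    (hiii : ∀ i n m : ℕ, 1 ≤ n → 1 ≤ m →
      C⁻¹ / M ^ m ≤ ∏ j ∈ Finset.Icc n (n + m), ‖w i j‖ ∧
        ∏ j ∈ Finset.Icc n (n + m), ‖w i j‖ ≤ C * M ^ m) :
    ∃ x : lp (fun _ : ℕ => ℂ) p, ∀ i : ℕ,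
      ∀ U : Set (lp (fun _ : ℕ => ℂ) p), IsOpen U → U.Nonempty →
        0 < lowerDensity {n : ℕ | ((B i) ^ n) x ∈ U} := by
  classical
  have hp1 : (1 : ℝ≥0∞) ≤ p := Fact.out
  have hpp : 0 < p.toReal := ENNReal.toReal_pos (by positivity) hp
  set P := p.toReal with hP
  set Ω : ℕ → ℝ := fun k => ∏ j ∈ Finset.Icc 1 k, ‖ω j‖ with hΩ
  have hΩpos : ∀ k, 0 < Ω k := fun k => Finset.prod_pos fun l hl =>
    norm_pos_iff.2 (hω0 l (Finset.mem_Icc.1 hl).1)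
  obtain ⟨h, hmono, htop, hnn, hsum⟩ := aux_h (fun k => Ω k ^ (-P))
    (fun k => Real.rpow_pos_of_pos (hΩpos k) _) hi
  obtain ⟨κ, hκ⟩ : ∃ κ : ℕ, η ^ κ * M ^ 2 ≤ 1 := by
    rcases hMη with ⟨h1, h2⟩ | ⟨_, h2⟩
    · exact ⟨0, by simp [h1]⟩
    · have hlt : η < 1 := lt_of_le_of_ne hη1 h2
      have hM2 : 0 < M ^ 2 := by positivity
      obtain ⟨κ, hκ⟩ := exists_pow_lt_of_lt_one (inv_pos.2 hM2) hlt
      refine ⟨κ, ?_⟩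
      have := mul_le_mul_of_nonneg_right hκ.le hM2.le
      rwa [inv_mul_cancel₀ hM2.ne'] at this
  obtain ⟨Y, Q, hYQ, hYd⟩ := aux_dense_seq p hp
  -- tasks
  set ix : ℕ → ℕ := fun s => s.unpair.1 with hix
  set y : ℕ → lp (fun _ : ℕ => ℂ) p := fun s => Y s.unpair.2.unpair.1 with hy
  set q : ℕ → ℕ := fun s => Q s.unpair.2.unpair.1 with hq
  have hyq : ∀ s u, q s ≤ u → y s u = 0 := fun s u hu => hYQ _ _ hu
  set K : ℝ := C * (1 + C ^ 2) / η with hK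
  have hKpos : 0 < K := by positivity
  set D : ℕ → ℝ := fun s => K * ∑ t ∈ Finset.range (q s), ‖y s t‖ * Ω t with hD
  have hDnn : ∀ s, 0 ≤ D s := fun s =>
    mul_nonneg hKpos.le (Finset.sum_nonneg fun t _ => mul_nonneg (norm_nonneg _) (hΩpos t).le)
  have hDt : ∀ s, ∀ t < q s, ‖y s t‖ * (K * Ω t) ≤ D s := by
    intro s t ht
    have : ‖y s t‖ * Ω t ≤ ∑ t ∈ Finset.range (q s), ‖y s t‖ * Ω t :=
      Finset.single_le_sum (f := fun t => ‖y s t‖ * Ω t)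
        (fun t _ => mul_nonneg (norm_nonneg _) (hΩpos t).le) (Finset.mem_range.2 ht)
    calc ‖y s t‖ * (K * Ω t) = K * (‖y s t‖ * Ω t) := by ring
      _ ≤ D s := mul_le_mul_of_nonneg_left this hKpos.le
  have hNex : ∀ s, ∃ n : ℕ, 2 ≤ n ∧ q s ≤ n ∧ s ≤ n ∧ D s ^ P ≤ h n := by
    intro s
    have := (htop.eventually (eventually_ge_atTop (D s ^ P))).and
      ((eventually_ge_atTop 2).and ((eventually_ge_atTop (q s)).and (eventually_ge_atTop s)))
    obtain ⟨n, h1, h2, h3, h4⟩ := this.exists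
    exact ⟨n, h2, h3, h4, h1⟩
  choose N hN2 hNq hNs hND using hNex
  obtain ⟨A, hAN, hAsep, hAdis, hAden⟩ := aux_sets N (fun s => by have := hN2 s; omega) κ
  obtain ⟨X, hX1, hX2⟩ := aux_x (fun s => w (ix s)) A N q hNq (fun s t => y s t)
    (fun r s n m h1 h2 h3 => (hAsep r s n m h1 h2 h3).1) hAdis
  -- main estimate
  have hest : ∀ i s m t u n : ℕ, m ∈ A s → t < q s → u + n = m + t → N s + t ≤ u →
      (i = ix s ∨ (2 ≤ n ∧ κ * n ≤ u - t)) →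
      ‖(∏ l ∈ Finset.Ico (u + 1) (u + n + 1), w i l) * X (u + n)‖ ^ P ≤ h u * Ω u ^ (-P) := by
    intro i s m t u n hm ht he hu hc
    have hk := aux_key w hw0 ω hω0 M η C hM hη0 hη1 hC hii hiii κ hκ i (ix s) t u n
      (by have := hN2 s; omega) hc
    have hb : ‖(∏ l ∈ Finset.Ico (u + 1) (u + n + 1), w i l) * X (u + n)‖ ≤ D s * (Ω u)⁻¹ := by
      rw [he, hX1 s m hm t ht, ← he, norm_mul, norm_div, norm_prod, norm_prod]
      calc _ = ‖y s t‖ * ((∏ l ∈ Finset.Ico (u + 1) (u + n + 1), ‖w i l‖) /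
            (∏ l ∈ Finset.Ico (t + 1) (u + n + 1), ‖w (ix s) l‖)) := by ring
        _ ≤ ‖y s t‖ * (K * Ω t / Ω u) := mul_le_mul_of_nonneg_left hk (norm_nonneg _)
        _ = ‖y s t‖ * (K * Ω t) * (Ω u)⁻¹ := by ring
        _ ≤ D s * (Ω u)⁻¹ :=
          mul_le_mul_of_nonneg_right (hDt s t ht) (inv_nonneg.2 (hΩpos u).le)
    calc _ ≤ (D s * (Ω u)⁻¹) ^ P := Real.rpow_le_rpow (norm_nonneg _) hb hpp.le
      _ = D s ^ P * Ω u ^ (-P) := by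
        rw [Real.mul_rpow (hDnn s) (inv_nonneg.2 (hΩpos u).le), Real.rpow_neg (hΩpos u).le,
          Real.inv_rpow (hΩpos u).le]
      _ ≤ h u * Ω u ^ (-P) := by
        refine mul_le_mul_of_nonneg_right ?_ (Real.rpow_nonneg (hΩpos u).le _)
        exact (hND s).trans (hmono (by omega))
  have hGnn : ∀ u, 0 ≤ h u * Ω u ^ (-P) := fun u =>
    mul_nonneg (hnn u) (Real.rpow_nonneg (hΩpos u).le _)
  have hXmem : Memℓp X p := by
    refine memℓp_gen ?_
    refine Summable.of_nonneg_of_le (fun u => Real.rpow_nonneg (norm_nonneg _) _) ?_ hsum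
    intro u
    by_cases h0 : X u = 0
    · rw [h0, norm_zero, Real.zero_rpow hpp.ne']
      exact hGnn u
    · obtain ⟨s, m, hm, t, ht, he⟩ := hX2 u h0
      have := hest (ix s) s m t u 0 hm ht he (by have := hAN s m hm; omega) (Or.inl rfl)
      simpa using this
  set x : lp (fun _ : ℕ => ℂ) p := ⟨X, hXmem⟩ with hx
  have hxX : ∀ k, x k = X k := fun k => rfl
  refine ⟨x, fun i U hU hne => ?_⟩
  obtain ⟨l, hl⟩ := hYd U hU hne
  obtain ⟨ε, hε, hball⟩ := Metric.isOpen_iff.1 hU _ hl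
  have htail := tendsto_sum_nat_add (fun u => h u * Ω u ^ (-P))
  have hεP : 0 < (ε / 2) ^ P := Real.rpow_pos_of_pos (by positivity) _
  obtain ⟨e, he⟩ := eventually_atTop.1 (htail.eventually (gt_mem_nhds hεP))
  set s := Nat.pair i (Nat.pair l e) with hs
  have hsi : ix s = i := by simp [hix, hs]
  have hsy : y s = Y l := by simp [hy, hs]
  have hes : e ≤ s := (Nat.right_le_pair l e).trans (Nat.right_le_pair i _)
  obtain ⟨c, hc, hden⟩ := hAden s
  refine aux_density (A s) _ ?_ c hc hden
  intro n hn
  show ((B i) ^ n) x ∈ U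
  apply hball
  rw [Metric.mem_ball, dist_eq_norm, ← hsy]
  refine lt_of_le_of_lt ?_ (half_lt_self hε)
  refine lp.norm_le_of_tsum_le hpp (by positivity) ?_
  have hNsn := hAN s n hn
  have hN2s := hN2 s
  -- pointwise
  have hpt : ∀ u, ‖(((B i) ^ n) x - y s) u‖ ^ P ≤
      if u < N s then 0 else h u * Ω u ^ (-P) := by
    intro u
    rw [lp.coeFn_sub, Pi.sub_apply, aux_iter_s8 p (w i) (B i) (hB i) x n u, hxX]
    by_cases huq : u < q s
    · have hNqz := hNq s
      rw [if_pos (by omega), add_comm u n, hX1 s n hn u huq, hsi, add_comm n u]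
      have hne0 : (∏ l ∈ Finset.Ico (u + 1) (u + n + 1), w i l) ≠ 0 :=
        Finset.prod_ne_zero_iff.2 fun l hl => hw0 i l
          (by have := (Finset.mem_Ico.1 hl).1; omega)
      rw [mul_div_cancel₀ _ hne0, sub_self, norm_zero, Real.zero_rpow hpp.ne']
    · rw [hyq s u (by omega), sub_zero]
      by_cases h0 : X (u + n) = 0
      · rw [h0, mul_zero, norm_zero, Real.zero_rpow hpp.ne']
        split_ifs
        · exact le_rfl
        · exact hGnn u
      · obtain ⟨r, m, hm, t, ht, hut⟩ := hX2 _ h0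
        have hNqr := hNq r
        rcases lt_trichotomy m n with hlt | heq | hgt
        · have := (hAsep r s m n hm hn hlt).1
          omega
        · subst heq
          have := hAdis r s m hm hn
          subst this
          omega
        · obtain ⟨g1, g2, g3⟩ := hAsep s r n m hn hm hgt
          rw [if_neg (by omega)]
          refine hest i r m t u n hm ht hut (by omega) ?_
          by_cases hrs : s = r
          · left; rw [← hrs, hsi]
          · right
            have := g3 hrs
            exact ⟨by omega, by omega⟩
  have hsumI : Summable (fun u => if u < N s then 0 else h u * Ω u ^ (-P)) := by
    refine Summable.of_nonneg_of_le (fun u => ?_) (fun u => ?_) hsum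
    · split_ifs
      · exact le_rfl
      · exact hGnn u
    · split_ifs
      · exact hGnn u
      · exact le_rfl
  have hsumL : Summable (fun u => ‖(((B i) ^ n) x - y s) u‖ ^ P) :=
    Summable.of_nonneg_of_le (fun u => Real.rpow_nonneg (norm_nonneg _) _) hpt hsumI
  refine (hsumL.tsum_le_tsum hpt hsumI).trans ?_
  have hsplit := hsumI.sum_add_tsum_nat_add (N s)
  rw [← hsplit, Finset.sum_eq_zero (fun u hu => by rw [if_pos (Finset.mem_range.1 hu)]), zero_add]
  have : (∑' u, if u + N s < N s then 0 else h (u + N s) * Ω (u + N s) ^ (-P)) =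
      ∑' u, h (u + N s) * Ω (u + N s) ^ (-P) :=
    tsum_congr fun u => by rw [if_neg (by omega)]
  rw [this]
  exact (he (N s) (hes.trans (hNs s))).le
end

section
/- Let X be a separable Banach space and (T_s)_{s≥1} a countable family of bounded linear operators on X. Assume there exist a dense linear subspace X₀ of X with T_s(X₀) ⊆ X₀ and X₀ ⊆ Per(T_s) for every s ≥ 1, and a constant α ∈ (0,1), such that: for every s, q ≥ 1, every ε > 0 and every x, y ∈ X₀, there exist z ∈ X₀ and integers n, d ≥ 1 such that for every 1 ≤ t ≤ q: (1) d is a multiple of p_{T_t}(y) and of p_{T_t}(z); (2) ‖T_t^k(z)‖ < ε for every 0 ≤ k ≤ αd; (3) ‖T_s^{n+k}(z) − T_s^k(x)‖ < ε for every 0 ≤ k ≤ αd. Then there exists a common frequently hypercyclic vector for the family (T_s)_{s≥1}. -/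
open Filter Topology

section counting
open Classical in
/-- number of `m ∈ [a, a+N)` with `A m` -/
noncomputable def cntI (A : ℕ → Prop) (a N : ℕ) : ℕ := ((Finset.Ico a (a+N)).filter A).card

lemma cntI_mono {A B : ℕ → Prop} {a N : ℕ} (h : ∀ m, a ≤ m → m < a + N → A m → B m) :
    cntI A a N ≤ cntI B a N := by
  classical
  unfold cntI
  apply Finset.card_le_card
  intro m hm
  simp only [Finset.mem_filter, Finset.mem_Ico] at hm ⊢
  exact ⟨hm.1, h m hm.1.1 hm.1.2 hm.2⟩

lemma cntI_mono_len {A : ℕ → Prop} {a M N : ℕ} (h : M ≤ N) : cntI A a M ≤ cntI A a N := by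
  classical
  unfold cntI
  apply Finset.card_le_card
  intro m hm
  simp only [Finset.mem_filter, Finset.mem_Ico] at hm ⊢
  exact ⟨⟨hm.1.1, by omega⟩, hm.2⟩

lemma cntI_add (A : ℕ → Prop) (a M N : ℕ) : cntI A a (M + N) = cntI A a M + cntI A (a + M) N := by
  classical
  unfold cntI
  rw [← Finset.card_union_of_disjoint, ← Finset.filter_union, ← add_assoc,
    Finset.Ico_union_Ico_eq_Ico (by omega) (by omega)]
  apply Finset.disjoint_filter_filter
  exact Finset.Ico_disjoint_Ico_consecutive _ _ _

lemma cntI_per {A : ℕ → Prop} {D : ℕ} (hA : ∀ m, A (m + D) ↔ A m) (a : ℕ) :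
    cntI A a D = cntI A 0 D := by
  classical
  have hp : Function.Periodic A D := fun m => propext (hA m)
  have h1 := Nat.filter_Ico_card_eq_of_periodic a D A hp
  have h2 := Nat.filter_Ico_card_eq_of_periodic 0 D A hp
  unfold cntI
  convert h1.trans h2.symm

lemma cntI_per_mul {A : ℕ → Prop} {D : ℕ} (hA : ∀ m, A (m + D) ↔ A m) (a q : ℕ) :
    cntI A a (q * D) = q * cntI A 0 D := by
  induction q with
  | zero => simp [cntI]
  | succ q ih => rw [add_mul, one_mul, cntI_add, ih, cntI_per hA (a + q * D)]; ring

lemma cntI_lower {A : ℕ → Prop} {D : ℕ} (hD : 0 < D) (hA : ∀ m, A (m + D) ↔ A m) {β : ℝ}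
    (hβ : 0 ≤ β) (h : β * D ≤ cntI A 0 D) (a N : ℕ) : β * ((N : ℝ) - D) ≤ cntI A a N := by
  have h1 : cntI A a ((N / D) * D) ≤ cntI A a N := cntI_mono_len (Nat.div_mul_le_self N D)
  rw [cntI_per_mul hA] at h1
  have h2 : ((N / D : ℕ) : ℝ) * cntI A 0 D ≤ cntI A a N := by exact_mod_cast h1
  have h3 : N < (N / D) * D + D := by
    have := Nat.div_add_mod N D
    have := Nat.mod_lt N hD
    nlinarith
  have h4 : (N : ℝ) < ((N / D : ℕ) : ℝ) * D + D := by exact_mod_cast h3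
  calc β * ((N : ℝ) - D) ≤ β * (((N / D : ℕ) : ℝ) * D) := by
        apply mul_le_mul_of_nonneg_left _ hβ; linarith
    _ = ((N / D : ℕ) : ℝ) * (β * D) := by ring
    _ ≤ ((N / D : ℕ) : ℝ) * cntI A 0 D := by gcongr
    _ ≤ _ := h2

lemma step_i {A A' : ℕ → Prop} {D D' n K : ℕ} {α β : ℝ} (hα0 : 0 < α) (hα1 : α < 1)
    (hD : 0 < D) (hD' : 0 < D')
    (hA : ∀ m, A (m + D) ↔ A m) (hA' : ∀ m, A' (m + D') ↔ A' m) (hβ : 0 ≤ β)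
    (hc : β * D ≤ cntI A 0 D) (hK : 2 * D ≤ K)
    (h : ∀ m k : ℕ, A m → (k : ℝ) ≤ α * D' + K → m ≡ n + k [MOD D'] → A' m) :
    α * β * D' ≤ cntI A' 0 D' := by
  have hDr : (0:ℝ) < D := by exact_mod_cast hD
  have hDr' : (0:ℝ) < D' := by exact_mod_cast hD'
  have hKr : 2 * (D:ℝ) ≤ K := by exact_mod_cast hK
  by_cases hcase : (D' : ℝ) ≤ α * D' + K
  · have hsub : ∀ m, A m → A' m := by
      intro m hm
      obtain ⟨k, hk, hk2⟩ : ∃ k, k < D' ∧ m ≡ n + k [MOD D'] := by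
        refine ⟨(m + (D' - n % D')) % D', Nat.mod_lt _ hD', ?_⟩
        have e1 : n + (m + (D' - n % D')) % D' ≡ n % D' + (m + (D' - n % D')) [MOD D'] :=
          Nat.ModEq.add (Nat.mod_modEq n D').symm (Nat.mod_modEq _ _)
        have e2 : n % D' + (m + (D' - n % D')) = m + D' := by
          have := Nat.mod_lt n hD'; omega
        rw [e2] at e1
        exact (e1.trans (by simp [Nat.ModEq])).symm
      have hkr : (k:ℝ) < D' := by exact_mod_cast hk
      exact h m k hm (by linarith) hk2
    have h1 : cntI A 0 (D' * D) ≤ cntI A' 0 (D * D') := by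
      rw [mul_comm D D']; exact cntI_mono (fun m _ _ => hsub m)
    rw [cntI_per_mul hA, cntI_per_mul hA'] at h1
    have h2 : (D' : ℝ) * cntI A 0 D ≤ D * cntI A' 0 D' := by exact_mod_cast h1
    have h3 : (D : ℝ) * (β * D') ≤ D * cntI A' 0 D' := by nlinarith
    have h4 := le_of_mul_le_mul_left h3 hDr
    have : 0 ≤ β * D' := by positivity
    nlinarith
  · push Not at hcase
    set M := ⌊α * D' + K⌋₊ + 1 with hM
    have hpos : 0 ≤ α * D' + K := by positivity
    have hM1 : α * D' + K < M := by rw [hM]; push_cast; exact Nat.lt_floor_add_one _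
    have hM2 : M ≤ D' := by
      have : ⌊α * D' + K⌋₊ < D' := (Nat.floor_lt hpos).2 hcase
      omega
    have h1 : cntI A n M ≤ cntI A' n M := by
      apply cntI_mono
      intro m hm1 hm2 hAm
      refine h m (m - n) hAm ?_ (by rw [Nat.add_sub_cancel' hm1])
      have : m - n ≤ ⌊α * D' + K⌋₊ := by omega
      exact (Nat.le_floor_iff hpos).1 this
    have h2 : cntI A' n M ≤ cntI A' n D' := cntI_mono_len hM2
    rw [cntI_per hA'] at h2
    have h3 : (cntI A n M : ℝ) ≤ cntI A' 0 D' := by exact_mod_cast h1.trans h2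
    have h4 := cntI_lower hD hA hβ hc n M
    have h5 : β * (α * D') ≤ β * ((M:ℝ) - D) := by
      apply mul_le_mul_of_nonneg_left _ hβ; linarith
    linarith

lemma step_ii {A A' : ℕ → Prop} {D D' K : ℕ} {α β : ℝ} (hα0 : 0 < α) (hα1 : α < 1)
    (hD : 0 < D) (hD' : 0 < D')
    (hA : ∀ m, A (m + D) ↔ A m) (hA' : ∀ m, A' (m + D') ↔ A' m) (hβ : 0 ≤ β)
    (hc : β * D ≤ cntI A 0 D) (hK : 2 * D ≤ K)
    (h : ∀ m k : ℕ, A m → (k : ℝ) ≤ α * D' + K → m ≡ 0 + k [MOD D'] → A' m)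
    (N : ℕ) (hN : 2 * D ≤ N) :
    α * β / 2 * N ≤ cntI A' 0 N := by
  have hDr : (1:ℝ) ≤ D := by exact_mod_cast hD
  have hDr' : (0:ℝ) < D' := by exact_mod_cast hD'
  have hKr : 2 * (D:ℝ) ≤ K := by exact_mod_cast hK
  have hNr : 2 * (D:ℝ) ≤ N := by exact_mod_cast hN
  have hpos : 0 ≤ α * D' + K := by positivity
  have hwin : ∀ M : ℕ, (M : ℝ) ≤ α * D' + K → β * ((M : ℝ) - D) ≤ cntI A' 0 M := by
    intro M hM
    have h1 : cntI A 0 M ≤ cntI A' 0 M := by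
      apply cntI_mono
      intro m _ hm hAm
      refine h m m hAm ?_ (by simp [Nat.ModEq])
      have : (m : ℝ) ≤ M := by exact_mod_cast (by omega : m ≤ M)
      linarith
    have h2 : (cntI A 0 M : ℝ) ≤ cntI A' 0 M := by exact_mod_cast h1
    exact (cntI_lower hD hA hβ hc 0 M).trans h2
  by_cases h1 : (N : ℝ) ≤ α * D' + K
  · have h2 := hwin N h1
    have h3 : β * ((N:ℝ) / 2) ≤ β * ((N : ℝ) - D) := by
      apply mul_le_mul_of_nonneg_left _ hβ; linarith
    have h4 : 0 ≤ β * N := by positivity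
    nlinarith
  push Not at h1
  by_cases h2 : 2 * D' ≤ N
  · have hi := step_i hα0 hα1 hD hD' hA hA' hβ hc hK h
    have h3 := cntI_lower hD' hA' (by positivity) hi 0 N
    have h2r : 2 * (D':ℝ) ≤ N := by exact_mod_cast h2
    have h4 : α * β * ((N:ℝ) / 2) ≤ α * β * ((N : ℝ) - D') := by
      apply mul_le_mul_of_nonneg_left _ (by positivity); linarith
    linarith
  · push Not at h2
    have h2r : (N:ℝ) < 2 * D' := by exact_mod_cast h2
    set M := ⌊α * D' + K⌋₊ with hM
    have hM1 : (M:ℝ) ≤ α * D' + K := Nat.floor_le hpos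
    have hM2 : α * D' + K < M + 1 := Nat.lt_floor_add_one _
    have hMN : M ≤ N := by
      have : (M:ℝ) ≤ N := by linarith
      exact_mod_cast this
    have h3 := hwin M hM1
    have h4 : (cntI A' 0 M : ℝ) ≤ cntI A' 0 N := by exact_mod_cast cntI_mono_len hMN
    have h5 : β * (α * (N / 2)) ≤ β * ((M:ℝ) - D) := by
      apply mul_le_mul_of_nonneg_left _ hβ; nlinarith
    linarith
end counting


section dyn
variable {𝕜 X : Type*} [NontriviallyNormedField 𝕜] [NormedAddCommGroup X] [NormedSpace 𝕜 X]

lemma pow_fix_iff (S : X →L[𝕜] X) (x : X) (m : ℕ) :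
    (S ^ m) x = x ↔ Function.minimalPeriod ⇑S x ∣ m := by
  rw [← Function.isPeriodicPt_iff_minimalPeriod_dvd, Function.IsPeriodicPt, Function.IsFixedPt,
    FunLike.coe_pow_eq_iterate]

lemma pow_fix_dvd (S : X →L[𝕜] X) {x : X} {m n : ℕ} (h : (S ^ m) x = x) (hmn : m ∣ n) :
    (S ^ n) x = x := by
  rw [pow_fix_iff] at *
  exact h.trans hmn

lemma pow_fix_modEq (S : X →L[𝕜] X) {x : X} {d m n : ℕ} (h : (S ^ d) x = x)
    (hm : m ≡ n [MOD d]) : (S ^ m) x = (S ^ n) x := by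
  have key : ∀ k, (S ^ k) x = (S ^ (k % d)) x := by
    intro k
    conv_lhs => rw [← Nat.mod_add_div k d, pow_add]
    rw [mul_apply_eq_comp, pow_fix_dvd S h (Dvd.intro _ rfl)]
  rw [key m, key n, hm]

lemma pow_add_apply' (S : X →L[𝕜] X) (m n : ℕ) (x : X) :
    (S ^ (m + n)) x = (S ^ m) ((S ^ n) x) := by
  rw [pow_add, mul_apply_eq_comp]

lemma pow_fix_comm (S : X →L[𝕜] X) {x : X} {d : ℕ} (k : ℕ) (h : (S ^ d) x = x) :
    (S ^ d) ((S ^ k) x) = (S ^ k) x := by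
  rw [← pow_add_apply', add_comm, pow_add_apply', h]

/-- The hypotheses of the criterion. -/
structure Crit (T : ℕ → X →L[𝕜] X) (X₀ : Submodule 𝕜 X) (α : ℝ) : Prop where
  hα0 : 0 < α
  hα1 : α < 1
  hinv : ∀ s : ℕ, ∀ x ∈ X₀, T s x ∈ X₀
  hper : ∀ s : ℕ, ∀ x ∈ X₀, ∃ m : ℕ, 0 < m ∧ ((T s) ^ m) x = x
  hmain : ∀ s q : ℕ, ∀ ε : ℝ, 0 < ε → ∀ x ∈ X₀, ∀ y ∈ X₀,
      ∃ z ∈ X₀, ∃ n d : ℕ, 1 ≤ n ∧ 1 ≤ d ∧ ∀ t : ℕ, t ≤ q →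
        (Function.minimalPeriod ⇑(T t) y ∣ d ∧
          Function.minimalPeriod ⇑(T t) z ∣ d) ∧
        (∀ k : ℕ, (k : ℝ) ≤ α * d → ‖((T t) ^ k) z‖ < ε) ∧
        (∀ k : ℕ, (k : ℝ) ≤ α * d → ‖((T s) ^ (n + k)) z - ((T s) ^ k) x‖ < ε)

variable {T : ℕ → X →L[𝕜] X} {X₀ : Submodule 𝕜 X} {α : ℝ}

lemma Crit.pow_mem (H : Crit T X₀ α) (s k : ℕ) {x : X} (hx : x ∈ X₀) : ((T s) ^ k) x ∈ X₀ := by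
  induction k with
  | zero => simpa using hx
  | succ k ih => rw [add_comm, pow_add_apply', pow_one]; exact H.hinv s _ ih

/-- every period of `Y` is a period of `u`, for all operators of index at most `q`. -/
def Dom (T : ℕ → X →L[𝕜] X) (q : ℕ) (Y u : X) : Prop :=
  ∀ t ≤ q, ∀ n : ℕ, ((T t) ^ n) Y = Y → ((T t) ^ n) u = u

lemma Dom.trans {q : ℕ} {a b c : X} (h1 : Dom T q a b) (h2 : Dom T q b c) : Dom T q a c :=
  fun t ht n hn => h2 t ht n (h1 t ht n hn)

lemma Crit.dom (H : Crit T X₀ α) (q : ℕ) {u v : X} (hu : u ∈ X₀) (hv : v ∈ X₀) :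
    ∃ Y ∈ X₀, Dom T q Y u ∧ Dom T q Y v := by
  have hP : ∀ t, ∃ P : ℕ, 0 < P ∧ ((T t) ^ P) u = u ∧ ((T t) ^ P) v = v := by
    intro t
    obtain ⟨a, ha, ha'⟩ := H.hper t u hu
    obtain ⟨b, hb, hb'⟩ := H.hper t v hv
    exact ⟨a * b, by positivity, pow_fix_dvd _ ha' (Dvd.intro _ rfl),
      pow_fix_dvd _ hb' (Dvd.intro_left _ rfl)⟩
  choose P hP0 hPu hPv using hP
  let B : Set 𝕜 := ⋃ t ∈ Set.Iic q, ⋃ n ∈ Set.Iio (P t),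
    {μ : 𝕜 | ((T t) ^ n) (u + μ • v) = u + μ • v ∧ ((T t) ^ n) v ≠ v}
  have hB : B.Finite := by
    refine (Set.finite_Iic q).biUnion fun t _ => (Set.finite_Iio (P t)).biUnion fun n _ => ?_
    apply Set.Subsingleton.finite
    rintro μ ⟨h1, h2⟩ ν ⟨h3, -⟩
    by_contra hne
    apply h2
    simp only [map_add, map_smul] at h1 h3
    have h4 : (μ - ν) • (((T t) ^ n) v - v) = 0 := by
      have := congrArg₂ (· - ·) h1 h3
      rw [smul_sub, sub_smul, sub_smul, sub_eq_zero]
      convert this using 1 <;> abel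
    rcases smul_eq_zero.1 h4 with h5 | h5
    · exact absurd (sub_eq_zero.1 h5) hne
    · exact sub_eq_zero.1 h5
  have : Infinite 𝕜 := NontriviallyNormedField.infinite 𝕜
  obtain ⟨μ, hμ⟩ := hB.exists_notMem
  have key : ∀ t ≤ q, ∀ n : ℕ, ((T t) ^ n) (u + μ • v) = u + μ • v →
      ((T t) ^ n) u = u ∧ ((T t) ^ n) v = v := by
    intro t ht n hn
    have hY : ((T t) ^ (P t)) (u + μ • v) = u + μ • v := by
      rw [map_add, map_smul, hPu, hPv]
    have hmod : n ≡ n % P t [MOD P t] := (Nat.mod_modEq _ _).symm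
    rw [pow_fix_modEq _ hY hmod] at hn
    rw [pow_fix_modEq _ (hPu t) hmod, pow_fix_modEq _ (hPv t) hmod]
    have hv' : ((T t) ^ (n % P t)) v = v := by
      by_contra hne
      apply hμ
      simp only [B, Set.mem_iUnion]
      exact ⟨t, ht, n % P t, Nat.mod_lt _ (hP0 t), hn, hne⟩
    refine ⟨?_, hv'⟩
    rw [map_add, map_smul, hv'] at hn
    exact add_right_cancel hn
  exact ⟨u + μ • v, X₀.add_mem hu (X₀.smul_mem _ hv), fun t ht n hn => (key t ht n hn).1,
    fun t ht n hn => (key t ht n hn).2⟩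

lemma Crit.query (H : Crit T X₀ α) (s q : ℕ) {ε : ℝ} (hε : 0 < ε) (K : ℕ) {x y : X}
    (hx : x ∈ X₀) (hy : y ∈ X₀) : ∃ z ∈ X₀, ∃ n d : ℕ, 1 ≤ d ∧
      (∀ t ≤ q, ((T t) ^ d) y = y ∧ ((T t) ^ d) z = z ∧
        ∀ k : ℕ, (k : ℝ) ≤ α * d + K → ‖((T t) ^ k) z‖ < ε) ∧
      ∀ k : ℕ, (k : ℝ) ≤ α * d + K → ‖((T s) ^ (n + k)) z - ((T s) ^ k) x‖ < ε := by
  obtain ⟨C, hC1, hCt, hCs⟩ : ∃ C : ℝ, 1 ≤ C ∧ (∀ t ≤ q, ‖T t‖ ≤ C) ∧ ‖T s‖ ≤ C := by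
    have h0 : 0 ≤ ∑ t ∈ Finset.range (q + 1), ‖T t‖ := Finset.sum_nonneg fun _ _ => norm_nonneg _
    have := norm_nonneg (T s)
    refine ⟨1 + ‖T s‖ + ∑ t ∈ Finset.range (q + 1), ‖T t‖, by linarith, ?_, by linarith⟩
    intro t ht
    have := Finset.single_le_sum (f := fun t => ‖T t‖) (fun i _ => norm_nonneg _)
      (Finset.mem_range.2 (Nat.lt_succ_of_le ht))
    linarith
  have hCK : 0 < C ^ K := by positivity
  obtain ⟨z, hz, n, d, -, hd, h⟩ := H.hmain s q (ε / C ^ K) (by positivity) x hx y hy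
  have hsplit : ∀ k : ℕ, (k : ℝ) ≤ α * d + K → ∃ j k0 : ℕ, k = j + k0 ∧ j ≤ K ∧ (k0:ℝ) ≤ α * d := by
    intro k hk
    by_cases hkK : k ≤ K
    · refine ⟨k, 0, rfl, hkK, ?_⟩
      have := H.hα0
      push_cast
      positivity
    · refine ⟨K, k - K, by omega, le_rfl, ?_⟩
      rw [Nat.cast_sub (by omega)]
      linarith
  have hbd : ∀ S : X →L[𝕜] X, ‖S‖ ≤ C → ∀ j ≤ K, ∀ v : X, ‖v‖ < ε / C ^ K → ‖(S ^ j) v‖ < ε := by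
    intro S hS j hj v hv
    have h1 : ‖S ^ j‖ ≤ C ^ K := by
      calc ‖S ^ j‖ ≤ C ^ j := by
            clear hj
            induction j with
            | zero => rw [pow_zero, pow_zero]; exact ContinuousLinearMap.norm_id_le (𝕜 := 𝕜) (E := X)
            | succ j ih =>
              rw [pow_succ, pow_succ]
              exact (norm_mul_le _ _).trans (by gcongr)
        _ ≤ C ^ K := pow_le_pow_right₀ hC1 hj
    calc ‖(S ^ j) v‖ ≤ ‖S ^ j‖ * ‖v‖ := (S ^ j).le_opNorm v
      _ ≤ C ^ K * ‖v‖ := by gcongr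
      _ < C ^ K * (ε / C ^ K) := by gcongr
      _ = ε := by field_simp
  refine ⟨z, hz, n, d, hd, ?_, ?_⟩
  · intro t ht
    obtain ⟨⟨h1, h2⟩, h3, -⟩ := h t ht
    refine ⟨(pow_fix_iff _ _ _).2 h1, (pow_fix_iff _ _ _).2 h2, ?_⟩
    intro k hk
    obtain ⟨j, k0, rfl, hj, hk0⟩ := hsplit k hk
    rw [pow_add_apply']
    exact hbd _ (hCt t ht) j hj _ (h3 k0 hk0)
  · intro k hk
    obtain ⟨-, -, h4⟩ := h 0 (Nat.zero_le _)
    obtain ⟨j, k0, rfl, hj, hk0⟩ := hsplit k hk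
    rw [show n + (j + k0) = j + (n + k0) by ring, pow_add_apply' _ j, pow_add_apply' _ j, ← map_sub]
    exact hbd _ hCs j hj _ (h4 k0 hk0)

lemma Crit.seq (H : Crit T X₀ α) (s q : ℕ) {ε : ℝ} (hε : 0 < ε) (K0 : ℕ) {Y0 : X}
    (hY0 : Y0 ∈ X₀) (v : ℕ → X) (hv : ∀ i, v i ∈ X₀) :
    ∃ (z : ℕ → X) (n d K : ℕ → ℕ), (∀ i, z i ∈ X₀) ∧ (∀ i, 1 ≤ d i) ∧ (∀ i, K0 ≤ K i) ∧
      (∀ i j, i < j → 2 * d i ≤ K j) ∧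
      (∀ i, ∀ t ≤ q, ((T t) ^ (d i)) Y0 = Y0) ∧
      (∀ i j, i ≤ j → ∀ t ≤ q, ((T t) ^ (d j)) (z i) = z i) ∧
      (∀ i, ∀ t ≤ q, ∀ k : ℕ, (k : ℝ) ≤ α * d i + K i → ‖((T t) ^ k) (z i)‖ < ε) ∧
      (∀ i, ∀ k : ℕ, (k : ℝ) ≤ α * d i + K i →
        ‖((T s) ^ (n i + k)) (z i) - ((T s) ^ k) (v i)‖ < ε) := by
  have step : ∀ (i : ℕ) (Y : X₀) (K : ℕ), ∃ (Y' z : X₀) (n d : ℕ), 1 ≤ d ∧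
      (∀ t ≤ q, ((T t) ^ d) (Y : X) = Y ∧ ((T t) ^ d) (z : X) = z ∧
        ∀ k : ℕ, (k : ℝ) ≤ α * d + K → ‖((T t) ^ k) (z : X)‖ < ε) ∧
      (∀ k : ℕ, (k : ℝ) ≤ α * d + K → ‖((T s) ^ (n + k)) (z : X) - ((T s) ^ k) (v i)‖ < ε) ∧
      Dom T q (Y' : X) (Y : X) ∧ Dom T q (Y' : X) (z : X) := by
    intro i Y K
    obtain ⟨z, hz, n, d, h1, h2, h3⟩ := H.query s q hε K (hv i) Y.2
    obtain ⟨Y', hY', h4, h5⟩ := H.dom q Y.2 hz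
    exact ⟨⟨Y', hY'⟩, ⟨z, hz⟩, n, d, h1, h2, h3, h4, h5⟩
  choose FY Fz Fn Fd h1 h2 h3 h4 h5 using step
  let st : ℕ → X₀ × ℕ := fun i => Nat.rec (⟨Y0, hY0⟩, K0)
    (fun i s => (FY i s.1 s.2, s.2 + 2 * Fd i s.1 s.2)) i
  have st0 : st 0 = (⟨Y0, hY0⟩, K0) := rfl
  have stS : ∀ i, st (i + 1) = (FY i (st i).1 (st i).2, (st i).2 + 2 * Fd i (st i).1 (st i).2) :=
    fun i => rfl
  have hdom : ∀ i j, i ≤ j → Dom T q ((st j).1 : X) ((st i).1 : X) := by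
    intro i j hij
    induction j, hij using Nat.le_induction with
    | base => exact fun t _ n hn => hn
    | succ j hj ih => rw [stS]; exact (h4 j _ _).trans ih
  have hK : Monotone fun i => (st i).2 := by
    apply monotone_nat_of_le_succ
    intro i
    rw [stS]
    exact Nat.le_add_right _ _
  refine ⟨fun i => Fz i (st i).1 (st i).2, fun i => Fn i (st i).1 (st i).2,
    fun i => Fd i (st i).1 (st i).2, fun i => (st i).2, fun i => Subtype.coe_prop _,
    fun i => h1 _ _ _, ?_, ?_, ?_, ?_, ?_, ?_⟩
  · intro i
    exact hK (Nat.zero_le i)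
  · intro i j hij
    have := hK (Nat.succ_le_of_lt hij)
    simp only [Nat.succ_eq_add_one, stS] at this
    simp only
    omega
  · intro i t ht
    exact hdom 0 i (Nat.zero_le i) t ht _ (h2 i (st i).1 (st i).2 t ht).1
  · intro i j hij t ht
    rcases hij.eq_or_lt with rfl | hij
    · exact (h2 i (st i).1 (st i).2 t ht).2.1
    · have ha := hdom (i + 1) j hij t ht _ (h2 j (st j).1 (st j).2 t ht).1
      rw [stS] at ha
      exact h5 i (st i).1 (st i).2 t ht _ ha
  · intro i t ht
    exact (h2 i (st i).1 (st i).2 t ht).2.2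
  · intro i
    exact h3 i (st i).1 (st i).2

end dyn


section dyn2
variable {𝕜 X : Type*} [NontriviallyNormedField 𝕜] [NormedAddCommGroup X] [NormedSpace 𝕜 X]
variable {T : ℕ → X →L[𝕜] X} {X₀ : Submodule 𝕜 X} {α : ℝ}

/-- pigeonhole: a coloring trick. -/
lemma pigeon (p : ℕ) (f : (Fin (p + 1) → Fin (p + 2)) → Fin (p + 1)) :
    ∃ c c', c ≠ c' ∧ f c = f c' ∧ ∀ a, a ≠ f c → c a = c' a := by
  let F : (Fin (p + 1) → Fin (p + 2)) → Fin (p + 1) × (Fin p → Fin (p + 2)) :=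
    fun c => (f c, fun a => c ((f c).succAbove a))
  have hcard : Fintype.card (Fin (p + 1) × (Fin p → Fin (p + 2))) <
      Fintype.card (Fin (p + 1) → Fin (p + 2)) := by
    simp only [Fintype.card_prod, Fintype.card_fin, Fintype.card_fun]
    rw [pow_succ, mul_comm]
    apply Nat.mul_lt_mul_of_pos_left (by omega)
    positivity
  obtain ⟨c, c', hne, h⟩ := Fintype.exists_ne_map_eq_of_card_lt F hcard
  have h1 : f c = f c' := congrArg Prod.fst h
  refine ⟨c, c', hne, h1, ?_⟩
  intro a ha
  obtain ⟨b, rfl⟩ := Fin.exists_succAbove_eq ha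
  have h2 := congrFun (congrArg Prod.snd h) b
  simp only [F] at h2
  rw [← h1] at h2
  exact h2

lemma Crit.two_step (H : Crit T X₀ α) {s q : ℕ} (hs : s ≤ q) {ε : ℝ} (hε : 0 < ε) (K0 : ℕ)
    {w x : X} (hw : w ∈ X₀) (hx : x ∈ X₀) :
    ∃ (z1 z2 : X) (n1 d1 K1 n2 d2 K2 : ℕ), z1 ∈ X₀ ∧ z2 ∈ X₀ ∧ 1 ≤ d1 ∧ 1 ≤ d2 ∧ K0 ≤ K1 ∧
      K0 ≤ K2 ∧ 2 * d1 ≤ K2 ∧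
      (∀ t ≤ q, ((T t) ^ d1) w = w ∧ ((T t) ^ d1) z1 = z1 ∧ ((T t) ^ d2) w = w ∧
        ((T t) ^ d2) z1 = z1 ∧ ((T t) ^ d2) z2 = z2 ∧
        (∀ k : ℕ, (k : ℝ) ≤ α * d1 + K1 → ‖((T t) ^ k) z1‖ < ε) ∧
        (∀ k : ℕ, (k : ℝ) ≤ α * d2 + K2 → ‖((T t) ^ k) z2‖ < ε)) ∧
      ((T s) ^ d1) x = x ∧ ((T s) ^ d2) x = x ∧
      (∀ m k k' : ℕ, (k : ℝ) ≤ α * d1 + K1 → m ≡ n1 + k [MOD d1] →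
        (k' : ℝ) ≤ α * d2 + K2 → m ≡ n2 + k' [MOD d2] →
        ‖((T s) ^ m) (w + z1 + z2) - ((T s) ^ m) x‖ < ε) := by
  set S := T s with hS
  set g := x - w with hg
  have hgX : g ∈ X₀ := X₀.sub_mem hx hw
  obtain ⟨Y0, hY0, hYw, hYx⟩ := H.dom q hw hx
  obtain ⟨p, hp⟩ : ∃ p, Function.minimalPeriod ⇑S g = p + 1 := by
    obtain ⟨m, hm, hm'⟩ := H.hper s g hgX
    have := Nat.pos_of_dvd_of_pos ((pow_fix_iff _ _ _).1 hm') hm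
    exact ⟨Function.minimalPeriod ⇑S g - 1, (Nat.sub_add_cancel this).symm⟩
  have hpg : (S ^ (p + 1)) g = g := (pow_fix_iff _ _ _).2 (by rw [hp])
  have : Infinite 𝕜 := NontriviallyNormedField.infinite 𝕜
  let γ : Fin (p + 2) → 𝕜 := fun a => Infinite.natEmbedding 𝕜 a
  have hγ : Function.Injective γ := fun a b hab =>
    Fin.val_injective ((Infinite.natEmbedding 𝕜).injective hab)
  obtain ⟨Λ, hΛ1, hΛ⟩ : ∃ Λ : ℝ, 1 ≤ Λ ∧ ∀ a b, ‖(γ a - γ b)⁻¹‖ ≤ Λ := by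
    obtain ⟨M, hM⟩ := (Set.finite_range fun ab : Fin (p + 2) × Fin (p + 2) =>
      ‖(γ ab.1 - γ ab.2)⁻¹‖).bddAbove
    exact ⟨max 1 M, le_max_left _ _, fun a b => (hM ⟨(a, b), rfl⟩).trans (le_max_right _ _)⟩
  let V : (Fin (p + 1) → Fin (p + 2)) → X := fun c => ∑ a, γ (c a) • (S ^ (a : ℕ)) g
  have hVX : ∀ c, V c ∈ X₀ := fun c =>
    X₀.sum_mem fun a _ => X₀.smul_mem _ (H.pow_mem s _ hgX)
  have hVp : ∀ c, (S ^ (p + 1)) (V c) = V c := by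
    intro c
    simp only [V, map_sum, map_smul]
    exact Finset.sum_congr rfl fun a _ => by rw [pow_fix_comm _ _ hpg]
  let e := Fintype.equivFin (Fin (p + 1) → Fin (p + 2))
  let v : ℕ → X := fun i => if h : i < Fintype.card (Fin (p + 1) → Fin (p + 2)) then
    V (e.symm ⟨i, h⟩) else 0
  have hv : ∀ i, v i ∈ X₀ := by
    intro i
    simp only [v]
    split_ifs
    · exact hVX _
    · exact X₀.zero_mem
  have hve : ∀ c, v (e c) = V c := by
    intro c
    simp only [v]
    rw [dif_pos (e c).2]
    simp
  have hε' : 0 < ε / (2 * Λ) := by positivity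
  obtain ⟨z, n, d, K, hz, hd, hK0, hdK, hdY, hdz, hsm, happ⟩ := H.seq s q hε' K0 hY0 v hv
  have hdg : ∀ i, p + 1 ∣ d i := by
    intro i
    rw [← hp, ← pow_fix_iff, hg, map_sub, hYw s hs _ (hdY i s hs), hYx s hs _ (hdY i s hs)]
  let f : (Fin (p + 1) → Fin (p + 2)) → Fin (p + 1) :=
    fun c => ⟨n (e c) % (p + 1), Nat.mod_lt _ (Nat.succ_pos _)⟩
  -- pick the two colorings, ordered
  obtain ⟨c, c', hlt, hf, hcc⟩ : ∃ c c', (e c : ℕ) < e c' ∧ f c = f c' ∧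
      ∀ a, a ≠ f c → c a = c' a := by
    obtain ⟨c, c', hne, hf, h⟩ := pigeon p f
    have hne' : (e c : ℕ) ≠ e c' := fun h => hne (e.injective (Fin.val_injective h))
    rcases lt_or_gt_of_ne hne' with hlt | hlt
    · exact ⟨c, c', hlt, hf, h⟩
    · exact ⟨c', c, hlt, hf.symm, fun a ha => (h a (hf ▸ ha)).symm⟩
  set i : ℕ := (e c).val
  set j : ℕ := (e c').val
  set b := f c with hb
  have hcne : c b ≠ c' b := by
    intro h
    have : c = c' := funext fun a => by
      by_cases ha : a = b
      · rw [ha, h]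
      · exact hcc a ha
    subst this
    exact lt_irrefl _ hlt
  have hμ : γ (c b) - γ (c' b) ≠ 0 := sub_ne_zero.2 fun h => hcne (hγ h)
  set lam := (γ (c b) - γ (c' b))⁻¹ with hlam
  have hVdiff : V c - V c' = (γ (c b) - γ (c' b)) • (S ^ (b : ℕ)) g := by
    simp only [V]
    rw [← Finset.sum_sub_distrib, Finset.sum_eq_single b]
    · rw [sub_smul]
    · intro a _ ha
      rw [hcc a ha, sub_self]
    · simp
  have hlamΛ : ‖lam‖ ≤ Λ := hΛ _ _
  have hsmall : ∀ u : X, ‖u‖ < ε / (2 * Λ) → ‖lam • u‖ < ε := by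
    intro u hu
    rw [norm_smul]
    calc ‖lam‖ * ‖u‖ ≤ Λ * ‖u‖ := by gcongr
      _ < Λ * (ε / (2 * Λ)) := by gcongr
      _ = ε / 2 := by field_simp
      _ < ε := by linarith
  refine ⟨lam • z i, -(lam • z j), n i, d i, K i, n j, d j, K j, X₀.smul_mem _ (hz i),
    X₀.neg_mem (X₀.smul_mem _ (hz j)), hd i, hd j, hK0 i, hK0 j, hdK i j hlt, ?_, ?_, ?_, ?_⟩
  · intro t ht
    refine ⟨hYw t ht _ (hdY i t ht), ?_, hYw t ht _ (hdY j t ht), ?_, ?_, ?_, ?_⟩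
    · rw [map_smul, hdz i i le_rfl t ht]
    · rw [map_smul, hdz i j hlt.le t ht]
    · rw [map_neg, map_smul, hdz j j le_rfl t ht]
    · intro k hk
      rw [map_smul]
      exact hsmall _ (hsm i t ht k hk)
    · intro k hk
      rw [map_neg, map_smul, norm_neg]
      exact hsmall _ (hsm j t ht k hk)
  · exact hYx s hs _ (hdY i s hs)
  · exact hYx s hs _ (hdY j s hs)
  · intro m k k' hk hmk hk' hmk'
    have e1 : (S ^ m) (z i) = (S ^ (n i + k)) (z i) := pow_fix_modEq _ (hdz i i le_rfl s hs) hmk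
    have e2 : (S ^ m) (z j) = (S ^ (n j + k')) (z j) := pow_fix_modEq _ (hdz j j le_rfl s hs) hmk'
    have a1 := happ i k hk
    have a2 := happ j k' hk'
    rw [← hS, ← e1, show v i = V c from hve c] at a1
    rw [← hS, ← e2, show v j = V c' from hve c'] at a2
    have m1 : m ≡ n i + k [MOD (p + 1)] := hmk.of_dvd (hdg i)
    have m2 : m ≡ n j + k' [MOD (p + 1)] := hmk'.of_dvd (hdg j)
    have hnb : n i ≡ b [MOD (p + 1)] := (Nat.mod_modEq _ _).symm
    have hnb' : n j ≡ b [MOD (p + 1)] := by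
      rw [hf]; exact (Nat.mod_modEq _ _).symm
    have m1' : m ≡ k + b [MOD (p + 1)] := by
      rw [add_comm k]; exact m1.trans (hnb.add_right k)
    have hkk : k' ≡ k [MOD (p + 1)] := by
      have h3 : k' + b ≡ k + b [MOD (p + 1)] := by
        refine Nat.ModEq.trans ?_ m1'
        rw [add_comm k']
        exact (m2.trans (hnb'.add_right k')).symm
      exact Nat.ModEq.add_right_cancel' _ h3
    rw [pow_fix_modEq S (hVp c') hkk] at a2
    have hgm : lam • ((S ^ k) (V c) - (S ^ k) (V c')) = (S ^ m) g := by
      rw [← map_sub, hVdiff, map_smul, smul_smul, hlam, inv_mul_cancel₀ hμ, one_smul,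
        ← pow_add_apply', pow_fix_modEq S hpg m1']
    have hfin : (S ^ m) (w + lam • z i + -(lam • z j)) - (S ^ m) x =
        lam • (((S ^ m) (z i) - (S ^ k) (V c)) - ((S ^ m) (z j) - (S ^ k) (V c'))) := by
      have : lam • (((S ^ m) (z i) - (S ^ k) (V c)) - ((S ^ m) (z j) - (S ^ k) (V c'))) =
        lam • (S ^ m) (z i) - lam • (S ^ m) (z j) -
          lam • ((S ^ k) (V c) - (S ^ k) (V c')) := by
        simp only [smul_sub]; abel
      rw [this, hgm, hg]
      simp only [map_add, map_neg, map_sub, map_smul]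
      abel
    rw [hfin, norm_smul]
    calc _ ≤ Λ * (‖(S ^ m) (z i) - (S ^ k) (V c)‖ + ‖(S ^ m) (z j) - (S ^ k) (V c')‖) := by
          gcongr
          exact norm_sub_le _ _
      _ < Λ * (ε / (2 * Λ) + ε / (2 * Λ)) := by gcongr
      _ = ε := by field_simp; ring

end dyn2


section dyn3
variable {𝕜 X : Type*} [NontriviallyNormedField 𝕜] [NormedAddCommGroup X] [NormedSpace 𝕜 X]
variable {T : ℕ → X →L[𝕜] X} {X₀ : Submodule 𝕜 X} {α : ℝ}

lemma pow_fix_add (S : X →L[𝕜] X) {x : X} {d : ℕ} (h : (S ^ d) x = x) (m : ℕ) :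
    (S ^ (m + d)) x = (S ^ m) x := by
  rw [pow_add_apply', h]

/-- number of `m < N` with `‖S^m w - x‖ < ρ`. -/
noncomputable def hits (S : X →L[𝕜] X) (w x : X) (ρ : ℝ) (N : ℕ) : ℕ :=
  cntI (fun m => ‖(S ^ m) w - x‖ < ρ) 0 N

lemma Crit.bigStep (H : Crit T X₀ α) {s q : ℕ} (hs : s ≤ q) {ε : ℝ} (hε : 0 < ε)
    {w x : X} (hw : w ∈ X₀) (hx : x ∈ X₀) {D K : ℕ} (hD : 0 < D) (hDK : 2 * D ≤ K) :
    ∃ (w' : X) (D' K' : ℕ), w' ∈ X₀ ∧ 0 < D' ∧ K < K' ∧ 2 * D' ≤ K' ∧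
      (∀ t ≤ q, ((T t) ^ D') w' = w') ∧
      (∀ t ≤ q, ∀ k ≤ K, ‖((T t) ^ k) (w' - w)‖ < ε) ∧
      (∀ t ≤ q, ((T t) ^ D) w = w → ∀ (x' : X) (ρ β : ℝ), 0 ≤ β →
        β * D ≤ hits (T t) w x' ρ D →
          α ^ 2 * β * D' ≤ hits (T t) w' x' (ρ + ε) D' ∧
          ∀ N ≥ K, α ^ 2 * β / 2 * N ≤ hits (T t) w' x' (ρ + ε) N) ∧
      α ^ 2 * (1 / (Function.minimalPeriod ⇑(T s) x : ℝ)) * D' ≤ hits (T s) w' x ε D' := by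
  have hα0 := H.hα0
  have hα1 := H.hα1
  set π := Function.minimalPeriod ⇑(T s) x with hπ
  have hπ0 : 0 < π := by
    obtain ⟨m, hm, hm'⟩ := H.hper s x hx
    exact Nat.pos_of_dvd_of_pos ((pow_fix_iff _ _ _).1 hm') hm
  obtain ⟨z1, z2, n1, d1, K1, n2, d2, K2, hz1, hz2, hd1, hd2, hK1, hK2, hdK, hq, hx1, hx2, hap⟩ :=
    H.two_step hs (half_pos hε) (K + 2 * π) hw hx
  have hk1 : ∀ k ≤ K, (k : ℝ) ≤ α * d1 + K1 := by
    intro k hk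
    have h1 : (k : ℝ) ≤ K1 := by exact_mod_cast (by omega : k ≤ K1)
    have h2 : 0 ≤ α * d1 := by positivity
    linarith
  have hk2 : ∀ k ≤ K2, (k : ℝ) ≤ α * d2 + K2 := by
    intro k hk
    have h1 : (k : ℝ) ≤ K2 := by exact_mod_cast hk
    have h2 : 0 ≤ α * d2 := by positivity
    linarith
  have hfix2 : ∀ t ≤ q, ((T t) ^ d2) (w + z1 + z2) = w + z1 + z2 := by
    intro t ht
    obtain ⟨a1, a2, a3, a4, a5, -, -⟩ := hq t ht
    rw [map_add, map_add, a3, a4, a5]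
  have hfix1 : ∀ t ≤ q, ((T t) ^ d1) (w + z1) = w + z1 := by
    intro t ht
    obtain ⟨a1, a2, a3, a4, a5, -, -⟩ := hq t ht
    rw [map_add, a1, a2]
  refine ⟨w + z1 + z2, d2, max K (2 * d2) + 1, X₀.add_mem (X₀.add_mem hw hz1) hz2, hd2,
    by omega, by omega, hfix2, ?_, ?_, ?_⟩
  · intro t ht k hk
    obtain ⟨-, -, -, -, -, b1, b2⟩ := hq t ht
    have c1 := b1 k (hk1 k hk)
    have c2 := b2 k (hk2 k (by omega))
    rw [show w + z1 + z2 - w = z1 + z2 by abel, map_add]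
    linarith [norm_add_le (((T t) ^ k) z1) (((T t) ^ k) z2)]
  · intro t ht hwD x' ρ β hβ hc
    obtain ⟨-, a2, -, -, a5, b1, b2⟩ := hq t ht
    let A0 : ℕ → Prop := fun m => ‖((T t) ^ m) w - x'‖ < ρ
    let A1 : ℕ → Prop := fun m => ‖((T t) ^ m) (w + z1) - x'‖ < ρ + ε / 2
    let A2 : ℕ → Prop := fun m => ‖((T t) ^ m) (w + z1 + z2) - x'‖ < ρ + ε
    have p0 : ∀ m, A0 (m + D) ↔ A0 m := fun m => by simp only [A0, pow_fix_add _ hwD]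
    have p1 : ∀ m, A1 (m + d1) ↔ A1 m := fun m => by simp only [A1, pow_fix_add _ (hfix1 t ht)]
    have p2 : ∀ m, A2 (m + d2) ↔ A2 m := fun m => by simp only [A2, pow_fix_add _ (hfix2 t ht)]
    have h01 : ∀ m k : ℕ, A0 m → (k : ℝ) ≤ α * d1 + K1 → m ≡ 0 + k [MOD d1] → A1 m := by
      intro m k hm hk hmk
      rw [zero_add] at hmk
      have c1 := b1 k hk
      rw [← pow_fix_modEq _ a2 hmk] at c1
      simp only [A0, A1] at hm ⊢
      rw [map_add, add_sub_right_comm]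
      linarith [norm_add_le (((T t) ^ m) w - x') (((T t) ^ m) z1)]
    have h12 : ∀ m k : ℕ, A1 m → (k : ℝ) ≤ α * d2 + K2 → m ≡ 0 + k [MOD d2] → A2 m := by
      intro m k hm hk hmk
      rw [zero_add] at hmk
      have c1 := b2 k hk
      rw [← pow_fix_modEq _ a5 hmk] at c1
      simp only [A1, A2] at hm ⊢
      rw [map_add _ (w + z1) z2, add_sub_right_comm]
      linarith [norm_add_le (((T t) ^ m) (w + z1) - x') (((T t) ^ m) z2)]
    have s1 := step_i hα0 hα1 hD hd1 p0 p1 hβ hc (by omega : 2 * D ≤ K1) h01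
    have hαβ : 0 ≤ α * β := by positivity
    have s2 := step_i hα0 hα1 hd1 hd2 p1 p2 hαβ s1 hdK h12
    constructor
    · have : α ^ 2 * β * d2 = α * (α * β) * d2 := by ring
      rw [this]; exact s2
    · intro N hN
      by_cases hN1 : 2 * d1 ≤ N
      · have := step_ii hα0 hα1 hd1 hd2 p1 p2 hαβ s1 hdK h12 N hN1
        have e : α ^ 2 * β / 2 * N = α * (α * β) / 2 * N := by ring
        rw [e]; exact this
      · have h3 := step_ii hα0 hα1 hD hd1 p0 p1 hβ hc (by omega : 2 * D ≤ K1) h01 N (by omega)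
        have h4 : cntI A1 0 N ≤ cntI A2 0 N := by
          apply cntI_mono
          intro m _ hm hA
          exact h12 m m hA (hk2 m (by omega)) (by rw [zero_add])
        have h5 : (cntI A1 0 N : ℝ) ≤ cntI A2 0 N := by exact_mod_cast h4
        have h6 : 0 ≤ α * β * N := by positivity
        have h7 : α ^ 2 * β / 2 * N ≤ α * β / 2 * N := by nlinarith
        exact h7.trans (h3.trans h5)
  · let A0 : ℕ → Prop := fun m => π ∣ m
    let A1 : ℕ → Prop := fun m => π ∣ m ∧ ∃ k : ℕ, (k : ℝ) ≤ α * d1 + K1 ∧ m ≡ n1 + k [MOD d1]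
    let A2 : ℕ → Prop := fun m => ‖((T s) ^ m) (w + z1 + z2) - x‖ < ε
    have hπd : π ∣ d1 := (pow_fix_iff _ _ _).1 hx1
    have p0 : ∀ m, A0 (m + π) ↔ A0 m := fun m => Nat.dvd_add_self_right
    have p1 : ∀ m, A1 (m + d1) ↔ A1 m := by
      intro m
      have e1 : π ∣ m + d1 ↔ π ∣ m := (Nat.dvd_add_left hπd)
      have e2 : ∀ k, m + d1 ≡ n1 + k [MOD d1] ↔ m ≡ n1 + k [MOD d1] := by
        intro k; simp [Nat.ModEq]
      simp only [A1, e1, e2]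
    have p2 : ∀ m, A2 (m + d2) ↔ A2 m := fun m => by simp only [A2, pow_fix_add _ (hfix2 s hs)]
    have hβ : (0:ℝ) ≤ 1 / π := by positivity
    have hc : 1 / (π : ℝ) * π ≤ cntI A0 0 π := by
      have hπr : (π : ℝ) ≠ 0 := by positivity
      rw [one_div_mul_cancel hπr]
      have : 0 < cntI A0 0 π := by
        unfold cntI
        apply Finset.card_pos.2
        exact ⟨0, by simp [A0, hπ0]⟩
      exact_mod_cast this
    have s1 := step_i (n := n1) hα0 hα1 hπ0 hd1 p0 p1 hβ hc (by omega : 2 * π ≤ K1)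
      (fun m k hm hk hmk => ⟨hm, k, hk, hmk⟩)
    have s2 := step_i (n := n2) hα0 hα1 hd1 hd2 p1 p2 (by positivity) s1 hdK (by
      rintro m k' ⟨hm, k, hk, hmk⟩ hk' hmk'
      have := hap m k k' hk hmk hk' hmk'
      rw [(pow_fix_iff (T s) x m).2 hm] at this
      exact this.trans (by linarith))
    have e : α ^ 2 * (1 / (π:ℝ)) * d2 = α * (α * (1 / π)) * d2 := by ring
    rw [e]; exact s2

end dyn3

lemma lowerDensity_pos {E : Set ℕ} {c : ℝ} (hc : 0 < c) (I : ℕ)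
    (h : ∀ N ≥ I, c * N ≤ cntI (fun m => m ∈ E) 0 N) : 0 < lowerDensity E := by
  classical
  have hsum : ∀ n : ℕ, (∑ k ∈ Finset.range (n + 1), Set.indicator E (fun _ => (1 : ℝ)) k) =
      cntI (fun m => m ∈ E) 0 (n + 1) := by
    intro n
    unfold cntI
    rw [zero_add, Finset.card_filter, Nat.cast_sum, Finset.range_eq_Ico]
    apply Finset.sum_congr rfl
    intro k _
    by_cases hk : k ∈ E <;> simp [hk]
  have hle : ∀ n : ℕ, (cntI (fun m => m ∈ E) 0 (n + 1) : ℝ) ≤ (n : ℝ) + 1 := by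
    intro n
    have : cntI (fun m => m ∈ E) 0 (n + 1) ≤ n + 1 := by
      unfold cntI
      refine (Finset.card_filter_le _ _).trans ?_
      simp
    exact_mod_cast this
  unfold lowerDensity
  refine hc.trans_le (le_liminf_of_le ?_ ?_)
  · refine IsBoundedUnder.isCoboundedUnder_ge (isBoundedUnder_of ⟨1, fun n => ?_⟩)
    rw [hsum, div_le_one (by positivity)]
    exact hle n
  · filter_upwards [eventually_ge_atTop I] with n hn
    rw [hsum, le_div_iff₀ (by positivity)]
    have := h (n + 1) (by omega)
    push_cast at this
    exact this

/-- a schedule in which every index occurs with bounded gaps. -/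
lemma schedule : ∃ r : ℕ → ℕ, (∀ i, r i ≤ i) ∧
    ∀ j, ∃ G, ∀ m, ∃ i, m ≤ i ∧ i ≤ m + G ∧ r i = j := by
  refine ⟨fun i => padicValNat 2 (i + 1), ?_, ?_⟩
  · intro i
    have h1 : 2 ^ padicValNat 2 (i + 1) ∣ i + 1 := pow_padicValNat_dvd
    have h2 := Nat.le_of_dvd (Nat.succ_pos i) h1
    have h3 := Nat.lt_two_pow_self (n := padicValNat 2 (i + 1))
    simp only
    omega
  · intro j
    refine ⟨2 ^ (j + 1) + 2 ^ j, fun m => ?_⟩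
    have hpos : 0 < 2 ^ j := by positivity
    refine ⟨2 ^ j * (2 * (m / 2 ^ (j + 1) + 1) + 1) - 1, ?_, ?_, ?_⟩
    · have h1 := Nat.div_add_mod m (2 ^ (j + 1))
      have h2 := Nat.mod_lt m (show 0 < 2 ^ (j + 1) by positivity)
      rw [pow_succ] at *
      apply Nat.le_sub_of_add_le
      nlinarith
    · have h1 := Nat.div_mul_le_self m (2 ^ (j + 1))
      rw [pow_succ] at *
      apply Nat.sub_le_of_le_add
      nlinarith
    · simp only
      rw [Nat.sub_add_cancel (Nat.succ_le_of_lt (by positivity)),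
        padicValNat.mul (by positivity) (by positivity), padicValNat.prime_pow,
        padicValNat.eq_zero_of_not_dvd (by omega), add_zero]

lemma exists_bracket {K : ℕ → ℕ} (hK : StrictMono K) {I N : ℕ} (hN : K I ≤ N) :
    ∃ i ≥ I, K i ≤ N ∧ N < K (i + 1) := by
  have hex : ∃ i, N < K i := ⟨N + 1, (Nat.lt_succ_self N).trans_le (hK.id_le _)⟩
  classical
  have h1 := Nat.find_spec hex
  have h2 : ∀ i < Nat.find hex, K i ≤ N := fun i hi => not_lt.1 (Nat.find_min hex hi)
  set a := Nat.find hex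
  have h3 : I < a := hK.lt_iff_lt.1 (hN.trans_lt h1)
  refine ⟨a - 1, by omega, h2 _ (by omega), ?_⟩
  rwa [Nat.sub_add_cancel (by omega)]

section dyn4
variable {𝕜 X : Type*} [NontriviallyNormedField 𝕜] [NormedAddCommGroup X] [NormedSpace 𝕜 X]
variable {T : ℕ → X →L[𝕜] X} {X₀ : Submodule 𝕜 X} {α : ℝ}

lemma Crit.chain (H : Crit T X₀ α) (σ : ℕ → ℕ) (hσ : ∀ i, σ i ≤ i) (y : ℕ → X)
    (hy : ∀ i, y i ∈ X₀) : ∃ (w : ℕ → X) (D K : ℕ → ℕ), StrictMono K ∧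
      (∀ i, ∀ t ≤ i, ((T t) ^ (D (i + 1))) (w (i + 1)) = w (i + 1)) ∧
      (∀ i, ∀ t ≤ i, ∀ k ≤ K i, ‖((T t) ^ k) (w (i + 1) - w i)‖ < (1 / 2) ^ i) ∧
      (∀ i, ∀ t ≤ i, ((T t) ^ (D i)) (w i) = w i → ∀ (x' : X) (ρ β : ℝ), 0 ≤ β →
        β * D i ≤ hits (T t) (w i) x' ρ (D i) →
          α ^ 2 * β * D (i + 1) ≤ hits (T t) (w (i + 1)) x' (ρ + (1 / 2) ^ i) (D (i + 1)) ∧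
          ∀ N ≥ K i, α ^ 2 * β / 2 * N ≤ hits (T t) (w (i + 1)) x' (ρ + (1 / 2) ^ i) N) ∧
      ∀ i, α ^ 2 * (1 / (Function.minimalPeriod ⇑(T (σ i)) (y i) : ℝ)) * D (i + 1) ≤
        hits (T (σ i)) (w (i + 1)) (y i) ((1 / 2) ^ i) (D (i + 1)) := by
  let St := {p : X × ℕ × ℕ // p.1 ∈ X₀ ∧ 0 < p.2.1 ∧ 2 * p.2.1 ≤ p.2.2}
  have step : ∀ (i : ℕ) (p : St), ∃ p' : St, p.1.2.2 < p'.1.2.2 ∧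
      (∀ t ≤ i, ((T t) ^ p'.1.2.1) p'.1.1 = p'.1.1) ∧
      (∀ t ≤ i, ∀ k ≤ p.1.2.2, ‖((T t) ^ k) (p'.1.1 - p.1.1)‖ < (1 / 2) ^ i) ∧
      (∀ t ≤ i, ((T t) ^ p.1.2.1) p.1.1 = p.1.1 → ∀ (x' : X) (ρ β : ℝ), 0 ≤ β →
        β * p.1.2.1 ≤ hits (T t) p.1.1 x' ρ p.1.2.1 →
          α ^ 2 * β * p'.1.2.1 ≤ hits (T t) p'.1.1 x' (ρ + (1 / 2) ^ i) p'.1.2.1 ∧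
          ∀ N ≥ p.1.2.2, α ^ 2 * β / 2 * N ≤ hits (T t) p'.1.1 x' (ρ + (1 / 2) ^ i) N) ∧
      α ^ 2 * (1 / (Function.minimalPeriod ⇑(T (σ i)) (y i) : ℝ)) * p'.1.2.1 ≤
        hits (T (σ i)) p'.1.1 (y i) ((1 / 2) ^ i) p'.1.2.1 := by
    rintro i ⟨⟨w, D, K⟩, hw, hD, hK⟩
    obtain ⟨w', D', K', h1, h2, h3, h4, h5⟩ := H.bigStep (hσ i)
      (show (0:ℝ) < (1 / 2) ^ i by positivity) hw (hy i) hD hK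
    exact ⟨⟨⟨w', D', K'⟩, h1, h2, h4⟩, h3, h5⟩
  choose F hF1 hF2 hF3 hF4 hF5 using step
  let st : ℕ → St := fun i => Nat.rec ⟨(0, 1, 2), X₀.zero_mem, by norm_num, by norm_num⟩
    (fun i p => F i p) i
  have stS : ∀ i, st (i + 1) = F i (st i) := fun i => rfl
  refine ⟨fun i => (st i).1.1, fun i => (st i).1.2.1, fun i => (st i).1.2.2, ?_, ?_, ?_, ?_, ?_⟩
  · exact strictMono_nat_of_lt_succ fun i => hF1 i (st i)
  · exact fun i => hF2 i (st i)
  · exact fun i => hF3 i (st i)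
  · exact fun i => hF4 i (st i)
  · exact fun i => hF5 i (st i)

lemma hits_mono {S : X →L[𝕜] X} {w w' x : X} {ρ ρ' : ℝ} {N : ℕ}
    (h : ∀ m < N, ‖(S ^ m) w - x‖ < ρ → ‖(S ^ m) w' - x‖ < ρ') :
    hits S w x ρ N ≤ hits S w' x ρ' N :=
  cntI_mono fun m _ hm hA => h m (by omega) hA

lemma Crit.exists_common (H : Crit T X₀ α) (hX₀ : Dense (X₀ : Set X)) [CompleteSpace X]
    [TopologicalSpace.SeparableSpace X] :
    ∃ x : X, ∀ s : ℕ, ∀ U : Set X, IsOpen U → U.Nonempty →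
      0 < lowerDensity {n : ℕ | ((T s) ^ n) x ∈ U} := by
  have hα0 := H.hα0
  have hα1 := H.hα1
  obtain ⟨r, hr, hr2⟩ := schedule
  have : SecondCountableTopology X := UniformSpace.secondCountable_of_separable X
  let ys : ℕ → X := fun l => (TopologicalSpace.denseSeq X₀ l : X)
  have hys : ∀ l, ys l ∈ X₀ := fun l => Subtype.coe_prop _
  have hysd : DenseRange ys := by
    have h1 : DenseRange (Subtype.val : X₀ → X) := by
      simpa [DenseRange] using hX₀
    exact h1.comp (TopologicalSpace.denseRange_denseSeq X₀) continuous_subtype_val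
  let σ : ℕ → ℕ := fun i => (Nat.unpair (r i)).1
  have hσ : ∀ i, σ i ≤ i := fun i => (Nat.unpair_left_le _).trans (hr i)
  obtain ⟨w, D, K, hK, hper, hsm, hden, hnew⟩ := H.chain σ hσ (fun i => ys (Nat.unpair (r i)).2)
    (fun i => hys _)
  -- the limit
  have hd : ∀ i, dist (w i) (w (i + 1)) ≤ 1 * (1 / 2 : ℝ) ^ i := by
    intro i
    have := (hsm i 0 (Nat.zero_le _) 0 (Nat.zero_le _)).le
    rw [pow_zero] at this
    rw [dist_eq_norm, norm_sub_rev, one_mul]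
    exact this
  obtain ⟨u, hu⟩ := cauchySeq_tendsto_of_complete
    (cauchySeq_of_le_geometric (1 / 2 : ℝ) 1 (by norm_num) hd)
  have hlim : ∀ i, ∀ t ≤ i, ∀ m ≤ K i, ‖((T t) ^ m) u - ((T t) ^ m) (w i)‖ ≤ 2 * (1 / 2) ^ i := by
    intro i t ht m hm
    have hdist : ∀ n, dist (((T t) ^ m) (w (i + n))) (((T t) ^ m) (w (i + (n + 1)))) ≤
        (1 / 2 : ℝ) ^ i * (1 / 2) ^ n := by
      intro n
      rw [dist_eq_norm, norm_sub_rev, ← map_sub, ← pow_add]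
      exact (hsm (i + n) t (by omega) m (hm.trans (hK.monotone (by omega)))).le
    have htend : Tendsto (fun n => ((T t) ^ m) (w (i + n))) atTop (𝓝 (((T t) ^ m) u)) := by
      have h1 : Tendsto (fun n => w (i + n)) atTop (𝓝 u) := by
        simpa only [add_comm] using (tendsto_add_atTop_iff_nat i).2 hu
      exact (((T t) ^ m).continuous.tendsto u).comp h1
    have := dist_le_of_le_geometric_of_tendsto₀ (1 / 2 : ℝ) ((1 / 2 : ℝ) ^ i) (by norm_num)
      hdist htend
    rw [dist_comm, dist_eq_norm, add_zero] at this
    refine this.trans (le_of_eq ?_)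
    rw [show (1:ℝ) - 1 / 2 = 1 / 2 by norm_num, div_div_eq_mul_div, div_one, mul_comm]
  -- density of one target along the chain
  have hdens : ∀ a g : ℕ,
      (α ^ 2) ^ (g + 1) * (1 / (Function.minimalPeriod ⇑(T (σ a)) (ys (Nat.unpair (r a)).2) : ℝ))
        * D (a + 1 + g) ≤ hits (T (σ a)) (w (a + 1 + g)) (ys (Nat.unpair (r a)).2)
          (2 * (1 / 2) ^ a - (1 / 2) ^ (a + g)) (D (a + 1 + g)) := by
    intro a g
    induction g with
    | zero =>
      have h1 := hnew a
      rw [zero_add, pow_one, add_zero, add_zero,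
        show (2:ℝ) * (1 / 2) ^ a - (1 / 2) ^ a = (1 / 2) ^ a by ring]
      exact h1
    | succ g ih =>
      have hp := hper (a + g) (σ a) ((hσ a).trans (by omega))
      rw [show a + g + 1 = a + 1 + g by ring] at hp
      have h1 := (hden (a + 1 + g) (σ a) ((hσ a).trans (by omega)) hp _ _ _ (by positivity) ih).1
      rw [show (2:ℝ) * (1 / 2) ^ a - (1 / 2) ^ (a + g) + (1 / 2) ^ (a + 1 + g) =
        2 * (1 / 2) ^ a - (1 / 2) ^ (a + (g + 1)) by ring] at h1
      rw [pow_succ' _ (g + 1), mul_assoc (α ^ 2)]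
      exact h1
  refine ⟨u, fun s U hU hUne => ?_⟩
  obtain ⟨y, hy⟩ := hUne
  obtain ⟨δ, hδ, hball⟩ := Metric.isOpen_iff.1 hU y hy
  obtain ⟨l, hl⟩ := hysd.exists_dist_lt y (half_pos hδ)
  obtain ⟨G, hG⟩ := hr2 (Nat.pair s l)
  obtain ⟨i0, hi0⟩ := exists_pow_lt_of_lt_one (show (0:ℝ) < δ / 8 by positivity)
    (show (1 / 2 : ℝ) < 1 by norm_num)
  set π := Function.minimalPeriod ⇑(T s) (ys l) with hπ
  have hπ0 : 0 < π := by
    obtain ⟨m, hm, hm'⟩ := H.hper s (ys l) (hys l)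
    exact Nat.pos_of_dvd_of_pos ((pow_fix_iff _ _ _).1 hm') hm
  have hπr : (0:ℝ) < 1 / π := by positivity
  have hc : 0 < (α ^ 2) ^ (G + 2) * (1 / (π : ℝ)) / 2 := by positivity
  refine lowerDensity_pos hc (K (i0 + G + 1)) fun N hN => ?_
  obtain ⟨i, hi, hKi, hKi'⟩ := exists_bracket hK hN
  obtain ⟨a, ha1, ha2, har⟩ := hG (i - 1 - G)
  obtain ⟨g, hg⟩ : ∃ g, i = a + 1 + g := ⟨i - (a + 1), by omega⟩
  have hgG : g ≤ G := by omega
  have hai0 : i0 ≤ a := by omega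
  have e1 : σ a = s := by simp [σ, har]
  have e2 : (Nat.unpair (r a)).2 = l := by simp [har]
  have hsa : s ≤ a := e1 ▸ hσ a
  have hdg := hdens a g
  rw [e1, e2, ← hπ, ← hg] at hdg
  have hp := hper (a + g) s (by omega)
  rw [show a + g + 1 = i by omega] at hp
  have h1 := (hden i s (by omega) hp _ _ _ (by positivity) hdg).2 N hKi
  have hpow : ∀ b, a ≤ b → ((1:ℝ) / 2) ^ b ≤ (1 / 2) ^ a := fun b hb =>
    pow_le_pow_of_le_one (by norm_num) (by norm_num) hb
  have hρ : (2:ℝ) * (1 / 2) ^ a - (1 / 2) ^ (a + g) + (1 / 2) ^ i ≤ 2 * (1 / 2) ^ a := by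
    have : ((1:ℝ) / 2) ^ i ≤ (1 / 2) ^ (a + g) :=
      pow_le_pow_of_le_one (by norm_num) (by norm_num) (by omega)
    linarith
  have h2 : hits (T s) (w (i + 1)) (ys l)
      (2 * (1 / 2) ^ a - (1 / 2) ^ (a + g) + (1 / 2) ^ i) N ≤
      cntI (fun m => m ∈ {n : ℕ | ((T s) ^ n) u ∈ U}) 0 N := by
    apply cntI_mono
    intro m _ hm hA
    apply hball
    rw [Metric.mem_ball]
    have b1 := hlim (i + 1) s (by omega) m (by omega)
    have b2 := hpow (i + 1) (by omega)
    have b3 : ((1:ℝ) / 2) ^ a ≤ (1 / 2) ^ i0 :=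
      pow_le_pow_of_le_one (by norm_num) (by norm_num) hai0
    rw [← dist_eq_norm] at b1 hA
    rw [dist_comm] at hl
    have t1 := dist_triangle (((T s) ^ m) u) (((T s) ^ m) (w (i + 1))) (ys l)
    have t2 := dist_triangle (((T s) ^ m) u) (ys l) y
    linarith
  have h3 : (hits (T s) (w (i + 1)) (ys l)
      (2 * (1 / 2) ^ a - (1 / 2) ^ (a + g) + (1 / 2) ^ i) N : ℝ) ≤
      cntI (fun m => m ∈ {n : ℕ | ((T s) ^ n) u ∈ U}) 0 N := by exact_mod_cast h2
  refine le_trans ?_ (h1.trans h3)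
  have h4 : (α ^ 2) ^ (G + 2) ≤ (α ^ 2) ^ (g + 2) :=
    pow_le_pow_of_le_one (by positivity) (by nlinarith) (by omega)
  rw [← mul_assoc, ← pow_succ' (α ^ 2) (g + 1)]
  gcongr

end dyn4

/-- Theorem 3.1 (common frequent hypercyclicity criterion via periodic points).
The period `p_T(x)` of a periodic point is `Function.minimalPeriod ⇑T x`. -/
theorem stmt14 {𝕜 X : Type*} [NontriviallyNormedField 𝕜]
    [NormedAddCommGroup X] [NormedSpace 𝕜 X]
    [CompleteSpace X] [TopologicalSpace.SeparableSpace X]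
    (T : ℕ → X →L[𝕜] X)
    (X₀ : Submodule 𝕜 X) (hX₀ : Dense (X₀ : Set X))
    (hinv : ∀ s : ℕ, ∀ x ∈ X₀, T s x ∈ X₀)
    (hper : ∀ s : ℕ, ∀ x ∈ X₀, ∃ m : ℕ, 0 < m ∧ ((T s) ^ m) x = x)
    (α : ℝ) (hα0 : 0 < α) (hα1 : α < 1)
    (hmain : ∀ s q : ℕ, ∀ ε : ℝ, 0 < ε → ∀ x ∈ X₀, ∀ y ∈ X₀,
      ∃ z ∈ X₀, ∃ n d : ℕ, 1 ≤ n ∧ 1 ≤ d ∧ ∀ t : ℕ, t ≤ q →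
        -- (1) d is a multiple of p_{T_t}(y) and of p_{T_t}(z)
        (Function.minimalPeriod ⇑(T t) y ∣ d ∧
          Function.minimalPeriod ⇑(T t) z ∣ d) ∧
        -- (2) ‖T_t^k(z)‖ < ε for 0 ≤ k ≤ αd
        (∀ k : ℕ, (k : ℝ) ≤ α * d → ‖((T t) ^ k) z‖ < ε) ∧
        -- (3) ‖T_s^{n+k}(z) − T_s^k(x)‖ < ε for 0 ≤ k ≤ αd
        (∀ k : ℕ, (k : ℝ) ≤ α * d → ‖((T s) ^ (n + k)) z - ((T s) ^ k) x‖ < ε)) :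
    ∃ x : X, ∀ s : ℕ, ∀ U : Set X, IsOpen U → U.Nonempty →
      0 < lowerDensity {n : ℕ | ((T s) ^ n) x ∈ U} := by
  exact Crit.exists_common ⟨hα0, hα1, hinv, hper, hmain⟩ hX₀
end

section
/- Let X be a Banach space, Y a separable Banach space, and 𝒯 = (T_n)_{n∈ℕ} a sequence of bounded linear operators from X to Y satisfying the Frequent Universality Criterion: there exist a dense subset Y₀ ⊆ Y and mappings S_n : Y₀ → X such that for every y ∈ Y₀: (1) the series ∑_{0≤n≤m} T_m(S_{m−n}(y)) converges unconditionally, uniformly for m ∈ ℕ; (2) the series ∑_{n≥0} T_m(S_{m+n}(y)) converges unconditionally, uniformly for m ∈ ℕ; (3) the series ∑_{n≥0} S_n(y) converges unconditionally; (4) T_n(S_n(y)) → y as n → ∞. Let 𝒟 denote the set of all completely admissible sequences α such that α ≲ 𝒟_s for some s ∈ ℕ, where 𝒟_s = (exp(k/log_{(s)}(k)))_{k≥k₀} (k₀ large enough so that the iterated logarithm is defined and positive), log_{(s)} is the s-fold iterated logarithm with log_{(0)}(x) = x, and α ≲ β means that the sequence (α_k/β_k) is non-increasing from some index on. Then ⋂_{α∈𝒟}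 FU_α(𝒯) ≠ ∅, i.e. there exists x ∈ X which is α-frequently universal for 𝒯 for every α ∈ 𝒟. -/
open Filter Topology

/-- A sequence `α = (α_k)_{k ≥ 1}` is completely admissible: non-negative,
non-decreasing, with divergent series, and `α_n / ∑_{j=1}^n α_j → 0`. -/
def CompletelyAdmissible (α : ℕ → ℝ) : Prop :=
  (∀ k, 0 ≤ α k) ∧ (∀ k l : ℕ, k ≤ l → α k ≤ α l) ∧
    Filter.Tendsto (fun n : ℕ => ∑ k ∈ Finset.Icc 1 n, α k) Filter.atTop Filter.atTop ∧
    Filter.Tendsto (fun n : ℕ => α n / ∑ k ∈ Finset.Icc 1 n, α k) Filter.atTop (nhds 0)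

/-- The lower `α`-density of `E ⊆ ℕ`. -/
noncomputable def alphaLowerDensity (α : ℕ → ℝ) (E : Set ℕ) : ℝ :=
  Filter.liminf (fun n : ℕ =>
    (∑ k ∈ Finset.Icc 1 n, Set.indicator E α k) / ∑ k ∈ Finset.Icc 1 n, α k)
    Filter.atTop

/-- The sequence `𝒟_s = (exp(k / log_{(s)} k))_k`, where `log_{(s)}` is the `s`-fold
iterated logarithm (with `log_{(0)} x = x`). -/
noncomputable def Dseq (s : ℕ) : ℕ → ℝ :=
  fun k => Real.exp ((k : ℝ) / (Real.log^[s] (k : ℝ)))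

/-- `α ≲ β`: the sequence `(α_k / β_k)` is non-increasing from some index on. -/
def Lesssim (α β : ℕ → ℝ) : Prop :=
  ∃ k₀ : ℕ, ∀ k l : ℕ, k₀ ≤ k → k ≤ l → α l / β l ≤ α k / β k

/-- A family of series `∑_{n ∈ R i} f i n` in a normed space converges unconditionally,
uniformly for `i : ι`. -/
def UnifUncondConv {ι X : Type*} [SeminormedAddCommGroup X]
    (f : ι → ℕ → X) (R : ι → Set ℕ) : Prop :=
  ∀ ε : ℝ, 0 < ε → ∃ N : ℕ, ∀ i : ι, ∀ F : Finset ℕ,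
    (∀ n ∈ F, N ≤ n ∧ n ∈ R i) → ‖∑ n ∈ F, f i n‖ < ε

lemma logIter_prop (s : ℕ) : Tendsto (Real.log^[s]) atTop atTop ∧
    ∃ B : ℝ, ∀ x y : ℝ, B ≤ x → x ≤ y → 0 < Real.log^[s] x ∧ Real.log^[s] x ≤ Real.log^[s] y := by
  induction s with
  | zero =>
    refine ⟨by simpa using tendsto_id, 1, fun x y hx hxy => ?_⟩
    simp only [Function.iterate_zero, id]
    exact ⟨by linarith, hxy⟩
  | succ s ih =>
    obtain ⟨ht, B, hB⟩ := ih
    refine ⟨?_, ?_⟩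
    · rw [Function.iterate_succ']
      exact Real.tendsto_log_atTop.comp ht
    · obtain ⟨C, hC⟩ := eventually_atTop.1 (ht.eventually_gt_atTop 1)
      refine ⟨max B C, fun x y hx hxy => ?_⟩
      have h1 := hB x y ((le_max_left _ _).trans hx) hxy
      have h2 := hC x ((le_max_right _ _).trans hx)
      rw [Function.iterate_succ_apply', Function.iterate_succ_apply']
      exact ⟨Real.log_pos h2, Real.log_le_log h1.1 h1.2⟩

/-- local near-constancy -/
lemma local_const (P st : ℕ → ℕ) (hP : Monotone P) (h2 : ∀ q, 2 * P q ≤ st q)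
    (hst : ∀ q s k : ℕ, s ≤ q → st q ≤ k → (P q : ℝ) ≤ Real.log^[s] (k : ℝ))
    (α : ℕ → ℝ) (hα0 : ∀ k, 0 ≤ α k) (s : ℕ) (hs : Lesssim α (Dseq s)) :
    ∃ n₀ : ℕ, ∀ q k j : ℕ, n₀ ≤ k → st q ≤ k → k ≤ j + P q → j ≤ k → α k ≤ 3 * α j := by
  obtain ⟨k₀, hk₀⟩ := hs
  obtain ⟨-, B, hB⟩ := logIter_prop s
  obtain ⟨b, hb⟩ := exists_nat_ge B
  refine ⟨max (st s) (2 * max k₀ b), fun q k j hk hq hj hjk => ?_⟩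
  have h3 : st s ≤ k := (le_max_left _ _).trans hk
  have h4 : 2 * max k₀ b ≤ k := (le_max_right _ _).trans hk
  have h5 := h2 q
  have h6 : max k₀ b ≤ j := by omega
  have h7 : k₀ ≤ j := (le_max_left _ _).trans h6
  have h8 : b ≤ j := (le_max_right _ _).trans h6
  have h9 := hk₀ j k h7 hjk
  have hBj : B ≤ (j : ℝ) := hb.trans (by exact_mod_cast h8)
  obtain ⟨h10, h11⟩ := hB (j : ℝ) (k : ℝ) hBj (by exact_mod_cast hjk)
  have h12 : (P q : ℝ) ≤ Real.log^[s] (k : ℝ) := by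
    rcases le_total s q with h | h
    · exact hst q s k h hq
    · exact le_trans (by exact_mod_cast hP h) (hst s s k le_rfl h3)
  simp only [Dseq] at h9
  set Lj := Real.log^[s] (j : ℝ)
  set Lk := Real.log^[s] (k : ℝ)
  have hLk : 0 < Lk := h10.trans_le h11
  rw [div_le_div_iff₀ (Real.exp_pos _) (Real.exp_pos _)] at h9
  have h13 : (k : ℝ) / Lk ≤ 1 + j / Lj := by
    have a1 : (j : ℝ) / Lk ≤ j / Lj := by gcongr
    have a2 : (k : ℝ) / Lk ≤ (j + P q) / Lk := by
      gcongr; exact_mod_cast hj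
    have a3 : (P q : ℝ) / Lk ≤ 1 := (div_le_one hLk).2 h12
    rw [add_div] at a2
    linarith
  have h14 : Real.exp (k / Lk) ≤ 3 * Real.exp (j / Lj) := by
    calc Real.exp (k / Lk) ≤ Real.exp (1 + j / Lj) := Real.exp_le_exp.2 h13
      _ = Real.exp 1 * Real.exp (j / Lj) := Real.exp_add _ _
      _ ≤ _ := by
        have := Real.exp_one_lt_d9
        gcongr; linarith
  have h15 : α k * Real.exp (j / Lj) ≤ (3 * α j) * Real.exp (j / Lj) := by
    calc _ ≤ _ := h9
      _ ≤ α j * (3 * Real.exp (j / Lj)) := by gcongr; exact hα0 j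
      _ = _ := by ring
  exact le_of_mul_le_mul_right h15 (Real.exp_pos _)

lemma multiples_lower (α : ℕ → ℝ) (hα0 : ∀ k, 0 ≤ α k) (hα : ∀ k l : ℕ, k ≤ l → α k ≤ α l)
    (P a b : ℕ) (hP : 0 < P) :
    ∑ j ∈ Finset.Ioc a b, α j ≤
      P * ∑ k ∈ Finset.Ioc a (b + P), Set.indicator {k | P ∣ k} α k := by
  classical
  set f := Set.indicator {k | P ∣ k} α with hf
  have f0 : ∀ k, 0 ≤ f k := fun k => Set.indicator_nonneg (fun k _ => hα0 k) k
  calc ∑ j ∈ Finset.Ioc a b, α j ≤ ∑ j ∈ Finset.Ioc a b, ∑ i ∈ Finset.range P, f (j + i) := by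
        refine Finset.sum_le_sum fun j _ => ?_
        obtain ⟨i, hi, hd⟩ : ∃ i < P, P ∣ j + i := by
          rcases Nat.eq_zero_or_pos (j % P) with h | h
          · exact ⟨0, hP, Nat.dvd_of_mod_eq_zero (by simpa using h)⟩
          · refine ⟨P - j % P, by omega, ⟨j / P + 1, ?_⟩⟩
            have := Nat.div_add_mod j P
            have := Nat.mod_lt j hP
            rw [mul_add]; omega
        calc α j ≤ α (j + i) := hα _ _ (by omega)
          _ = f (j + i) := by
            rw [hf, Set.indicator_of_mem]; exact hd
          _ ≤ _ := Finset.single_le_sum (f := fun i => f (j + i)) (fun i _ => f0 _)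
              (Finset.mem_range.2 hi)
    _ = ∑ i ∈ Finset.range P, ∑ j ∈ Finset.Ioc a b, f (j + i) := Finset.sum_comm
    _ ≤ ∑ i ∈ Finset.range P, ∑ k ∈ Finset.Ioc a (b + P), f k := by
        refine Finset.sum_le_sum fun i hi => ?_
        rw [Finset.mem_range] at hi
        rw [← Finset.sum_image (f := f) (g := fun j => j + i) (by intro x _ y _ h; simpa using h)]
        refine Finset.sum_le_sum_of_subset_of_nonneg ?_ (fun _ _ _ => f0 _)
        intro k hk
        simp only [Finset.mem_image, Finset.mem_Ioc] at hk ⊢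
        obtain ⟨j, hj, rfl⟩ := hk
        omega
    _ = _ := by simp

def badMod (P N k : ℕ) : Prop := k % P < N ∨ P ≤ k % P + N

lemma bad_count (P N j : ℕ) (hP : 0 < P) :
    ∑ i ∈ Finset.range P, Set.indicator {k | badMod P N k} (fun _ => (1 : ℝ)) (j + i)
      ≤ 2 * N := by
  classical
  have per : Function.Periodic (badMod P N) P := by
    intro k; simp [badMod]
  have h := Nat.filter_Ico_card_eq_of_periodic j P (badMod P N) per
  have h2 : P.count (badMod P N) ≤ 2 * N := by
    rw [Nat.count_eq_card_filter_range]
    calc _ ≤ (Finset.range N ∪ Finset.Ico (P - N) P).card := by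
          refine Finset.card_le_card ?_
          intro k hk
          obtain ⟨hk1, hk2⟩ := Finset.mem_filter.1 hk
          rw [Finset.mem_range] at hk1
          unfold badMod at hk2
          rw [Nat.mod_eq_of_lt hk1] at hk2
          simp only [Finset.mem_range, Finset.mem_union, Finset.mem_Ico]
          omega
      _ ≤ _ := Finset.card_union_le _ _
      _ ≤ _ := by simp; omega
  have h3 : ∑ i ∈ Finset.range P, Set.indicator {k | badMod P N k} (fun _ => (1 : ℝ)) (j + i)
      = ((Finset.Ico j (j + P)).filter (badMod P N)).card := by
    rw [Finset.card_filter, Finset.sum_Ico_eq_sum_range]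
    simp [Set.indicator_apply]
  rw [h3, h]
  exact_mod_cast h2

lemma bad_upper (α : ℕ → ℝ) (hα0 : ∀ k, 0 ≤ α k) (P N st n₀ n : ℕ) (hP : 0 < P)
    (hst : 2 * P ≤ st)
    (h : ∀ k j : ℕ, n₀ ≤ k → st ≤ k → k ≤ j + P → j ≤ k → α k ≤ 3 * α j) :
    P * ∑ k ∈ Finset.Ioc n₀ n, Set.indicator {k | st ≤ k ∧ badMod P N k} α k ≤
      6 * N * ∑ k ∈ Finset.Icc 1 n, α k := by
  classical
  set g := Set.indicator {k | badMod P N k} (fun _ => (1 : ℝ)) with hg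
  have g0 : ∀ k, 0 ≤ g k := fun k => Set.indicator_nonneg (fun k _ => zero_le_one) k
  set Ds := (Finset.Ioc n₀ n).filter (fun k => st ≤ k ∧ badMod P N k) with hDs
  have e1 : ∑ k ∈ Finset.Ioc n₀ n, Set.indicator {k | st ≤ k ∧ badMod P N k} α k
      = ∑ k ∈ Ds, α k := by
    rw [hDs, Finset.sum_filter]
    simp [Set.indicator_apply]
  rw [e1]
  calc P * ∑ k ∈ Ds, α k = ∑ k ∈ Ds, ∑ i ∈ Finset.range P, α k := by
        simp [Finset.mul_sum]
    _ ≤ ∑ k ∈ Ds, ∑ i ∈ Finset.range P, 3 * (g k * α (k - i)) := by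
        refine Finset.sum_le_sum fun k hk => Finset.sum_le_sum fun i hi => ?_
        simp only [hDs, Finset.mem_filter, Finset.mem_Ioc, Finset.mem_range] at hk hi
        have : g k = 1 := by rw [hg, Set.indicator_of_mem]; exact hk.2.2
        rw [this, one_mul]
        exact h k (k - i) (by omega) hk.2.1 (by omega) (by omega)
    _ = ∑ i ∈ Finset.range P, ∑ k ∈ Ds, 3 * (g k * α (k - i)) := Finset.sum_comm
    _ ≤ ∑ i ∈ Finset.range P, ∑ j ∈ Finset.Icc 1 n, 3 * (g (j + i) * α j) := by
        refine Finset.sum_le_sum fun i hi => ?_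
        rw [Finset.mem_range] at hi
        have e2 : ∑ k ∈ Ds, 3 * (g k * α (k - i)) =
            ∑ j ∈ Ds.image (fun k => k - i), 3 * (g (j + i) * α j) := by
          rw [Finset.sum_image]
          · refine Finset.sum_congr rfl fun k hk => ?_
            simp only [hDs, Finset.mem_filter, Finset.mem_Ioc] at hk
            rw [Nat.sub_add_cancel (by omega)]
          · intro x hx y hy hxy
            simp only [hDs, Finset.coe_filter, Set.mem_ofPred_eq, Finset.mem_Ioc] at hx hy hxy
            omega
        rw [e2]
        refine Finset.sum_le_sum_of_subset_of_nonneg ?_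
          (fun j _ _ => mul_nonneg (by norm_num) (mul_nonneg (g0 _) (hα0 _)))
        intro j hj
        simp only [hDs, Finset.mem_image, Finset.mem_filter, Finset.mem_Ioc,
          Finset.mem_Icc] at hj ⊢
        obtain ⟨k, hk, rfl⟩ := hj
        omega
    _ = ∑ j ∈ Finset.Icc 1 n, 3 * α j * ∑ i ∈ Finset.range P, g (j + i) := by
        rw [Finset.sum_comm]
        refine Finset.sum_congr rfl fun j _ => ?_
        rw [Finset.mul_sum]
        exact Finset.sum_congr rfl fun i _ => by ring
    _ ≤ ∑ j ∈ Finset.Icc 1 n, 3 * α j * (2 * N) := by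
        refine Finset.sum_le_sum fun j _ => ?_
        exact mul_le_mul_of_nonneg_left (bad_count P N j hP) (by have := hα0 j; positivity)
    _ = _ := by
        rw [Finset.mul_sum]
        exact Finset.sum_congr rfl fun i _ => by ring

lemma sum_half_le (p n : ℕ) : ∑ q ∈ Finset.Ioc p n, (1 / 2 : ℝ) ^ q ≤ 1 := by
  have h : ∀ n, ∑ q ∈ Finset.range n, (1 / 2 : ℝ) ^ (q + 1) = 1 - (1 / 2) ^ n := by
    intro n
    induction n with
    | zero => simp
    | succ n ih => rw [Finset.sum_range_succ, ih]; ring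
  calc _ ≤ ∑ q ∈ (Finset.range n).image (fun q => q + 1), (1 / 2 : ℝ) ^ q := by
        refine Finset.sum_le_sum_of_subset_of_nonneg ?_ (fun _ _ _ => by positivity)
        intro q hq
        simp only [Finset.mem_Ioc, Finset.mem_image, Finset.mem_range] at hq ⊢
        exact ⟨q - 1, by omega, by omega⟩
    _ = _ := by rw [Finset.sum_image (by intro x _ y _ h; simpa using h), h]
    _ ≤ 1 := by
      have : (0 : ℝ) ≤ (1 / 2) ^ n := by positivity
      linarith

def Eset (P N st : ℕ → ℕ) (p : ℕ) : Set ℕ :=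
  {k | st p + N p ≤ k ∧ P p ∣ k ∧ ∀ q, p < q → ¬ (st q ≤ k ∧ badMod (P q) (N q) k)}

lemma density_pos (P N st : ℕ → ℕ) (hP0 : ∀ q, 0 < P q)
    (hPN : ∀ p q : ℕ, p < q → 24 * N q * P p * 2 ^ q ≤ P q)
    (h2 : ∀ q, 2 * P q ≤ st q) (hq : ∀ q, q ≤ st q)
    (α : ℕ → ℝ) (hα : CompletelyAdmissible α)
    (hc : ∃ n₀ : ℕ, ∀ q k j : ℕ, n₀ ≤ k → st q ≤ k → k ≤ j + P q → j ≤ k → α k ≤ 3 * α j)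
    (p : ℕ) :
    ∀ᶠ n in atTop, 1 / (4 * (P p : ℝ)) ≤
      (∑ k ∈ Finset.Icc 1 n, Set.indicator (Eset P N st p) α k) / ∑ k ∈ Finset.Icc 1 n, α k := by
  classical
  obtain ⟨hα0, hαm, hαinf, hαr⟩ := hα
  obtain ⟨n₁, hn₁⟩ := hc
  set n₀ := max n₁ (st p + N p) with hn₀
  set A := fun n : ℕ => ∑ k ∈ Finset.Icc 1 n, α k with hA
  have hPp : (0 : ℝ) < P p := by exact_mod_cast hP0 p
  filter_upwards [hαinf.eventually_gt_atTop 0, hαinf.eventually_ge_atTop (4 * A n₀),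
    hαr.eventually_le_const (show (0 : ℝ) < 1 / (4 * P p) by positivity),
    eventually_ge_atTop (n₀ + P p)] with n hn1 hn2 hn3 hn4
  change 0 < A n at hn1
  change 4 * A n₀ ≤ A n at hn2
  change α n / A n ≤ _ at hn3
  change _ ≤ _ / A n
  rw [div_le_div_iff₀ hn1 (by positivity)] at hn3
  rw [div_le_div_iff₀ (by positivity) hn1]
  set I : Set ℕ → ℕ → ℝ := fun s => Set.indicator s α with hI
  have I0 : ∀ s k, 0 ≤ I s k := fun s k => Set.indicator_nonneg (fun k _ => hα0 k) k
  set D : ℕ → Set ℕ := fun q => {k | st q ≤ k ∧ badMod (P q) (N q) k} with hD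
  have s1 : ∑ k ∈ Finset.Ioc n₀ n, I (Eset P N st p) k ≤
      ∑ k ∈ Finset.Icc 1 n, I (Eset P N st p) k := by
    refine Finset.sum_le_sum_of_subset_of_nonneg ?_ (fun _ _ _ => I0 _ _)
    intro k hk
    simp only [Finset.mem_Ioc, Finset.mem_Icc] at hk ⊢
    omega
  have s2 : ∑ k ∈ Finset.Ioc n₀ n, I {k | P p ∣ k} k ≤
      ∑ k ∈ Finset.Ioc n₀ n, I (Eset P N st p) k +
        ∑ q ∈ Finset.Ioc p n, ∑ k ∈ Finset.Ioc n₀ n, I (D q) k := by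
    rw [Finset.sum_comm, ← Finset.sum_add_distrib]
    refine Finset.sum_le_sum fun k hk => ?_
    rw [Finset.mem_Ioc] at hk
    have hs0 : 0 ≤ ∑ q ∈ Finset.Ioc p n, I (D q) k := Finset.sum_nonneg fun q _ => I0 _ _
    by_cases hd : P p ∣ k
    · have e1 : I {k | P p ∣ k} k = α k := Set.indicator_of_mem (by exact hd) _
      rw [e1]
      by_cases hE : k ∈ Eset P N st p
      · have e2 : I (Eset P N st p) k = α k := Set.indicator_of_mem hE _
        linarith
      · have : ∃ q, p < q ∧ k ∈ D q := by
          by_contra hcon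
          push Not at hcon
          exact hE ⟨(le_max_right _ _).trans hk.1.le, hd, hcon⟩
        obtain ⟨q, hpq, hkq⟩ := this
        have e3 : I (D q) k = α k := Set.indicator_of_mem hkq _
        have e4 : I (D q) k ≤ ∑ q ∈ Finset.Ioc p n, I (D q) k :=
          Finset.single_le_sum (f := fun q => I (D q) k) (fun q _ => I0 _ _)
            (Finset.mem_Ioc.2 ⟨hpq, (hq q).trans (hkq.1.trans hk.2)⟩)
        have := I0 (Eset P N st p) k
        linarith
    · have e1 : I {k | P p ∣ k} k = 0 := Set.indicator_of_notMem (by exact hd) _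
      have := I0 (Eset P N st p) k
      linarith
  have s3 : ∑ q ∈ Finset.Ioc p n, ∑ k ∈ Finset.Ioc n₀ n, I (D q) k ≤ A n / (4 * P p) := by
    calc _ ≤ ∑ q ∈ Finset.Ioc p n, (A n / (4 * P p)) * (1 / 2 : ℝ) ^ q := by
          refine Finset.sum_le_sum fun q hqm => ?_
          rw [Finset.mem_Ioc] at hqm
          have b := bad_upper α hα0 (P q) (N q) (st q) n₀ n (hP0 q) (h2 q)
            (fun k j hk => hn₁ q k j ((le_max_left _ _).trans hk))
          have c : (24 * N q * P p * 2 ^ q : ℝ) ≤ P q := by exact_mod_cast hPN p q hqm.1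
          have hPq : (0 : ℝ) < P q := by exact_mod_cast hP0 q
          change (P q : ℝ) * ∑ k ∈ Finset.Ioc n₀ n, I (D q) k ≤ 6 * N q * A n at b
          refine le_of_mul_le_mul_left (b.trans ?_) hPq
          have : (P q : ℝ) * (A n / (4 * P p) * (1 / 2) ^ q) =
            P q * (A n / (4 * P p * 2 ^ q)) := by
            rw [one_div, inv_pow]; field_simp
          rw [this, ← mul_div_assoc, le_div_iff₀ (by positivity)]
          nlinarith
      _ = (A n / (4 * P p)) * ∑ q ∈ Finset.Ioc p n, (1 / 2 : ℝ) ^ q := by rw [Finset.mul_sum]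
      _ ≤ (A n / (4 * P p)) * 1 :=
          mul_le_mul_of_nonneg_left (sum_half_le p n) (by positivity)
      _ = _ := mul_one _
  have s4 := multiples_lower α hα0 hαm (P p) n₀ (n - P p) (hP0 p)
  rw [Nat.sub_add_cancel (by omega)] at s4
  have s5 : A n ≤ A n₀ + ∑ j ∈ Finset.Ioc n₀ (n - P p), α j + P p * α n := by
    have u : Finset.Icc 1 n ⊆ Finset.Icc 1 n₀ ∪ Finset.Ioc n₀ (n - P p) ∪ Finset.Ioc (n - P p) n := by
      intro k hk
      simp only [Finset.mem_union, Finset.mem_Icc, Finset.mem_Ioc] at hk ⊢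
      omega
    have v : ∑ k ∈ Finset.Ioc (n - P p) n, α k ≤ P p * α n := by
      calc _ ≤ ∑ k ∈ Finset.Ioc (n - P p) n, α n :=
            Finset.sum_le_sum fun k hk => hαm _ _ (Finset.mem_Ioc.1 hk).2
        _ = _ := by
          rw [Finset.sum_const, Nat.card_Ioc, Nat.sub_sub_self (by omega)]; simp
    have w : ∀ a b : Finset ℕ, ∑ k ∈ a ∪ b, α k ≤ ∑ k ∈ a, α k + ∑ k ∈ b, α k := by
      intro a b
      have := Finset.sum_union_inter (s₁ := a) (s₂ := b) (f := α)
      have h0 : 0 ≤ ∑ k ∈ a ∩ b, α k := Finset.sum_nonneg fun k _ => hα0 k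
      linarith
    have t1 := Finset.sum_le_sum_of_subset_of_nonneg u (f := α) (fun k _ _ => hα0 k)
    have t2 := w (Finset.Icc 1 n₀ ∪ Finset.Ioc n₀ (n - P p)) (Finset.Ioc (n - P p) n)
    have t3 := w (Finset.Icc 1 n₀) (Finset.Ioc n₀ (n - P p))
    simp only [hA]
    linarith
  change _ ≤ (P p : ℝ) * ∑ k ∈ Finset.Ioc n₀ n, I {k | P p ∣ k} k at s4
  change 1 * A n ≤ (∑ k ∈ Finset.Icc 1 n, I (Eset P N st p) k) * (4 * P p)
  have s3' := mul_le_mul_of_nonneg_left s3 hPp.le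
  have e : (P p : ℝ) * (A n / (4 * P p)) = A n / 4 := by field_simp
  rw [e] at s3'
  have s2' := mul_le_mul_of_nonneg_left (s2.trans (add_le_add_left s1 _)) hPp.le
  linarith

lemma liminf_pos (α : ℕ → ℝ) (hα0 : ∀ k, 0 ≤ α k) (E E' : Set ℕ) (hE : E ⊆ E') (c : ℝ)
    (hc : 0 < c)
    (h : ∀ᶠ n in atTop, c ≤
      (∑ k ∈ Finset.Icc 1 n, Set.indicator E α k) / ∑ k ∈ Finset.Icc 1 n, α k) :
    0 < alphaLowerDensity α E' := by
  refine hc.trans_le ?_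
  unfold alphaLowerDensity
  have hA : ∀ n : ℕ, 0 ≤ ∑ k ∈ Finset.Icc 1 n, α k := fun n => Finset.sum_nonneg fun k _ => hα0 k
  refine le_liminf_of_le ?_ ?_
  · refine IsBoundedUnder.isCoboundedUnder_ge ⟨1, ?_⟩
    rw [eventually_map]
    refine Eventually.of_forall fun n => div_le_one_of_le₀ ?_ (hA n)
    exact Finset.sum_le_sum fun k _ => Set.indicator_le_self' (fun k _ => hα0 k) k
  · filter_upwards [h] with n hn
    refine hn.trans (div_le_div_of_nonneg_right ?_ (hA n))
    exact Finset.sum_le_sum fun k _ =>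
      Set.indicator_le_indicator_of_subset hE (fun k => hα0 k) k

lemma comb (N : ℕ → ℕ) (hN : ∀ q, 1 ≤ N q) :
    ∃ E : ℕ → Set ℕ, (∀ p, ∀ n ∈ E p, N p ≤ n) ∧
      (∀ p q n m : ℕ, p ≤ q → n ∈ E p → m ∈ E q → (p ≠ q ∨ n ≠ m) →
        n + N q ≤ m ∨ m + N q ≤ n) ∧
      ∀ α : ℕ → ℝ, CompletelyAdmissible α → (∃ s : ℕ, Lesssim α (Dseq s)) →
        ∀ p, ∀ E' : Set ℕ, E p ⊆ E' → 0 < alphaLowerDensity α E' := by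
  classical
  obtain ⟨P, hPN0, hPs⟩ : ∃ P : ℕ → ℕ, P 0 = N 0 ∧
      ∀ q, P (q + 1) = 24 * N (q + 1) * P q * 2 ^ (q + 1) :=
    ⟨fun n => Nat.rec (N 0) (fun q r => 24 * N (q + 1) * r * 2 ^ (q + 1)) n, rfl, fun _ => rfl⟩
  have hP0 : ∀ q, 0 < P q := by
    intro q
    induction q with
    | zero => rw [hPN0]; exact hN 0
    | succ q ih => rw [hPs]; have := hN (q + 1); positivity
  have hP : Monotone P := by
    refine monotone_nat_of_le_succ fun q => ?_
    rw [hPs]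
    calc P q = 1 * P q * 1 := by ring
      _ ≤ 24 * N (q + 1) * P q * 2 ^ (q + 1) := by
        gcongr
        · have := hN (q + 1); omega
        · exact Nat.one_le_two_pow
  have hPN : ∀ p q : ℕ, p < q → 24 * N q * P p * 2 ^ q ≤ P q := by
    intro p q hpq
    obtain ⟨r, rfl⟩ : ∃ r, q = r + 1 := ⟨q - 1, by omega⟩
    rw [hPs]
    gcongr
    exact hP (by omega)
  have hNP : ∀ q, N q ≤ P q := by
    intro q
    rcases q with _ | q
    · exact hPN0.ge
    · rw [hPs]
      calc N (q + 1) = 1 * N (q + 1) * 1 * 1 := by ring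
        _ ≤ _ := by
          gcongr
          · norm_num
          · exact hP0 q
          · exact Nat.one_le_two_pow
  have hst : ∀ q, ∃ t : ℕ, 2 * P q ≤ t ∧ q ≤ t ∧
      ∀ s k : ℕ, s ≤ q → t ≤ k → (P q : ℝ) ≤ Real.log^[s] (k : ℝ) := by
    intro q
    have h : ∀ᶠ k : ℕ in atTop, ∀ s ∈ Finset.range (q + 1), (P q : ℝ) ≤ Real.log^[s] (k : ℝ) := by
      rw [Filter.eventually_all_finset]
      intro s _
      exact ((logIter_prop s).1.comp tendsto_natCast_atTop_atTop).eventually_ge_atTop _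
    obtain ⟨t, ht⟩ := eventually_atTop.1 h
    refine ⟨max t (max (2 * P q) q), by omega, by omega, fun s k hs hk => ?_⟩
    exact ht k (by omega) s (Finset.mem_range.2 (by omega))
  choose st hst1 hst2 hst3 using hst
  refine ⟨Eset P N st, ?_, ?_, ?_⟩
  · intro p n hn
    have := hn.1
    omega
  · intro p q n m hpq hn hm hne
    rcases hpq.eq_or_lt with rfl | hpq
    · have hne : n ≠ m := by simpa using hne
      have h1 := hNP p
      obtain ⟨c, rfl⟩ := hn.2.1
      obtain ⟨d, rfl⟩ := hm.2.1
      rcases lt_trichotomy c d with h | h | h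
      · left
        have : P p * (c + 1) ≤ P p * d := Nat.mul_le_mul_left _ h
        rw [mul_add] at this; omega
      · exact absurd (by rw [h]) hne
      · right
        have : P p * (d + 1) ≤ P p * c := Nat.mul_le_mul_left _ h
        rw [mul_add] at this; omega
    · have h := hn.2.2 q hpq
      have hm1 := hm.1
      by_cases hs : st q ≤ n
      · have hb : ¬ badMod (P q) (N q) n := fun hb => h ⟨hs, hb⟩
        unfold badMod at hb
        push Not at hb
        obtain ⟨d, hd⟩ := hm.2.1
        have hdm := Nat.div_add_mod n (P q)
        set c := n / P q
        rcases lt_or_ge c d with hcd | hcd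
        · left
          have : P q * (c + 1) ≤ P q * d := Nat.mul_le_mul_left _ hcd
          rw [mul_add] at this; omega
        · right
          have : P q * d ≤ P q * c := Nat.mul_le_mul_left _ hcd
          omega
      · left; omega
  · rintro α hα ⟨s, hs⟩ p E' hE'
    have hPp : (0 : ℝ) < P p := by exact_mod_cast hP0 p
    exact liminf_pos α hα.1 _ E' hE' _ (by positivity)
      (density_pos P N st hP0 hPN hst1 hst2 α hα
        (local_const P st hP hst1 (fun q s k h => hst3 q s k h) α hα.1 s hs) p)

lemma norm_tsum_le_of_finset {X : Type*} [NormedAddCommGroup X] (f : ℕ → X) (hf : Summable f)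
    (c : ℝ) (h : ∀ F : Finset ℕ, ‖∑ n ∈ F, f n‖ ≤ c) : ‖∑' n, f n‖ ≤ c :=
  le_of_tendsto' (hf.hasSum.norm) h

lemma choose_N {X Y : Type*} [NormedAddCommGroup X] [NormedAddCommGroup Y]
    (a b : ℕ → ℕ → ℕ → Y) (c : ℕ → ℕ → X) (d : ℕ → ℕ → Y) (y : ℕ → Y)
    (h1 : ∀ j, UnifUncondConv (a j) (fun m => {n | n ≤ m}))
    (h2 : ∀ j, UnifUncondConv (b j) (fun _ => Set.univ))
    (h3 : ∀ j, UnifUncondConv (fun _ : Unit => c j) (fun _ => Set.univ))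
    (h4 : ∀ j, Tendsto (d j) atTop (nhds (y j))) :
    ∃ N : ℕ → ℕ, (∀ q, 1 ≤ N q) ∧ Monotone N ∧ ∀ j q, j ≤ q →
      (∀ m, ∀ F : Finset ℕ, (∀ n ∈ F, N q ≤ n ∧ n ≤ m) → ‖∑ n ∈ F, a j m n‖ ≤ (1 / 4 : ℝ) ^ q) ∧
      (∀ m, ∀ F : Finset ℕ, (∀ n ∈ F, N q ≤ n) → ‖∑ n ∈ F, b j m n‖ ≤ (1 / 4 : ℝ) ^ q) ∧
      (∀ F : Finset ℕ, (∀ n ∈ F, N q ≤ n) → ‖∑ n ∈ F, c j n‖ ≤ (1 / 4 : ℝ) ^ q) ∧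
      (∀ n, N q ≤ n → ‖d j n - y j‖ ≤ (1 / 4 : ℝ) ^ q) := by
  have hp : ∀ q : ℕ, (0 : ℝ) < (1 / 4 : ℝ) ^ q := fun q => by positivity
  choose N1 hN1 using fun j q : ℕ => h1 j _ (hp q)
  choose N2 hN2 using fun j q : ℕ => h2 j _ (hp q)
  choose N3 hN3 using fun j q : ℕ => h3 j _ (hp q)
  choose N4 hN4 using fun j q : ℕ => Metric.tendsto_atTop.1 (h4 j) _ (hp q)
  set M : ℕ → ℕ → ℕ := fun j q => N1 j q + N2 j q + N3 j q + N4 j q with hM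
  set N : ℕ → ℕ := fun q =>
    1 + ∑ r ∈ Finset.range (q + 1), ∑ j ∈ Finset.range (q + 1), M j r with hN
  have hMN : ∀ j q, j ≤ q → M j q ≤ N q := by
    intro j q hj
    have e1 : M j q ≤ ∑ j ∈ Finset.range (q + 1), M j q :=
      Finset.single_le_sum (f := fun j => M j q) (fun _ _ => Nat.zero_le _)
        (Finset.mem_range.2 (by omega))
    have e2 : ∑ j ∈ Finset.range (q + 1), M j q ≤
        ∑ r ∈ Finset.range (q + 1), ∑ j ∈ Finset.range (q + 1), M j r :=
      Finset.single_le_sum (f := fun r => ∑ j ∈ Finset.range (q + 1), M j r)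
        (fun _ _ => Nat.zero_le _) (Finset.mem_range.2 (by omega))
    simp only [hN]; omega
  refine ⟨N, fun q => Nat.le_add_right _ _, ?_, ?_⟩
  · intro q q' h
    simp only [hN]
    have hsub : Finset.range (q + 1) ⊆ Finset.range (q' + 1) :=
      Finset.range_subset_range.2 (by omega)
    refine Nat.add_le_add_left ?_ 1
    calc _ ≤ ∑ r ∈ Finset.range (q + 1), ∑ j ∈ Finset.range (q' + 1), M j r :=
          Finset.sum_le_sum fun r _ => Finset.sum_le_sum_of_subset hsub
      _ ≤ _ := Finset.sum_le_sum_of_subset hsub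
  · intro j q hj
    have hm := hMN j q hj
    simp only [hM] at hm
    refine ⟨fun m F hF => ?_, fun m F hF => ?_, fun F hF => ?_, fun n hn => ?_⟩
    · exact (hN1 j q m F fun n hn => ⟨by have := (hF n hn).1; omega, (hF n hn).2⟩).le
    · exact (hN2 j q m F fun n hn => ⟨by have := hF n hn; omega, trivial⟩).le
    · exact (hN3 j q () F fun n hn => ⟨by have := hF n hn; omega, trivial⟩).le
    · rw [← dist_eq_norm]
      exact (hN4 j q n (by omega)).le

/-- Proposition 4.7: a sequence of operators satisfying the Frequent Universality
Criterion admits a vector which is `α`-frequently universal simultaneously for all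
completely admissible `α` with `α ≲ 𝒟_s` for some `s`. -/
theorem stmt19 {𝕜 X Y : Type*} [NontriviallyNormedField 𝕜]
    [NormedAddCommGroup X] [NormedSpace 𝕜 X] [CompleteSpace X]
    [NormedAddCommGroup Y] [NormedSpace 𝕜 Y] [CompleteSpace Y]
    [TopologicalSpace.SeparableSpace Y]
    (T : ℕ → X →L[𝕜] Y)
    (Y₀ : Set Y) (hY₀ : Dense Y₀)
    (S : ℕ → Y₀ → X)
    -- (1) ∑_{0 ≤ n ≤ m} T_m(S_{m−n}(y)), uniformly in m
    (h1 : ∀ y : Y₀, UnifUncondConv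
      (fun m : ℕ => fun n : ℕ => T m (S (m - n) y)) (fun m => {n | n ≤ m}))
    -- (2) ∑_{n ≥ 0} T_m(S_{m+n}(y)), uniformly in m
    (h2 : ∀ y : Y₀, UnifUncondConv
      (fun m : ℕ => fun n : ℕ => T m (S (m + n) y)) (fun _ => Set.univ))
    -- (3) ∑_{n ≥ 0} S_n(y) converges unconditionally
    (h3 : ∀ y : Y₀, UnifUncondConv
      (fun _ : Unit => fun n : ℕ => S n y) (fun _ => Set.univ))
    -- (4) T_n(S_n(y)) → y
    (h4 : ∀ y : Y₀, Filter.Tendsto (fun n : ℕ => T n (S n y)) Filter.atTop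
      (nhds (y : Y))) :
    ∃ x : X, ∀ α : ℕ → ℝ, CompletelyAdmissible α →
      (∃ s : ℕ, Lesssim α (Dseq s)) →
      ∀ U : Set Y, IsOpen U → U.Nonempty →
        0 < alphaLowerDensity α {n : ℕ | T n x ∈ U} := by

  classical
  -- a dense sequence in `Y₀`
  haveI : Nonempty Y₀ := hY₀.nonempty.to_subtype
  haveI : TopologicalSpace.SeparableSpace Y₀ := by
    haveI : SecondCountableTopology Y := UniformSpace.secondCountable_of_separable Y
    infer_instance
  let z : ℕ → Y₀ := TopologicalSpace.denseSeq Y₀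
  have hz : DenseRange z := TopologicalSpace.denseRange_denseSeq Y₀
  let y : ℕ → Y₀ := fun p => z (Nat.unpair p).1
  obtain ⟨N, hN1, hNm, hN⟩ := choose_N
    (fun j m n => T m (S (m - n) (y j))) (fun j m n => T m (S (m + n) (y j)))
    (fun j n => S n (y j)) (fun j n => T n (S n (y j))) (fun j => (y j : Y))
    (fun j => h1 (y j)) (fun j => h2 (y j)) (fun j => h3 (y j)) (fun j => h4 (y j))
  obtain ⟨E, hE1, hE2, hE3⟩ := comb N hN1
  let f : ℕ → ℕ → X := fun j => Set.indicator (E j) (fun n => S n (y j))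
  have hfsum : ∀ j, ∀ F : Finset ℕ, ∑ n ∈ F, f j n = ∑ n ∈ F.filter (· ∈ E j), S n (y j) := by
    intro j F
    rw [Finset.sum_filter]
    exact Finset.sum_congr rfl fun n _ => by simp [f, Set.indicator_apply]
  have hf : ∀ j, Summable (f j) := by
    intro j
    rw [summable_iff_vanishing_norm]
    intro ε hε
    obtain ⟨K, hK⟩ := h3 (y j) ε hε
    refine ⟨Finset.range K, fun F hF => ?_⟩
    rw [hfsum]
    refine hK () _ fun n hn => ⟨?_, trivial⟩
    by_contra hlt
    exact Finset.disjoint_left.1 hF (Finset.mem_filter.1 hn).1 (Finset.mem_range.2 (by omega))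
  have hq2 : ∀ q : ℕ, (1 / 4 : ℝ) ^ q ≤ (1 / 2) ^ q := fun q => by gcongr; norm_num
  let w : ℕ → X := fun j => ∑' n, f j n
  have hwn : ∀ j, ‖w j‖ ≤ (1 / 2 : ℝ) ^ j := by
    intro j
    refine (norm_tsum_le_of_finset _ (hf j) _ fun F => ?_).trans (hq2 j)
    rw [hfsum]
    exact (hN j j le_rfl).2.2.1 _ fun n hn => hE1 j n (Finset.mem_filter.1 hn).2
  have hgeo : Summable fun j : ℕ => (1 / 2 : ℝ) ^ j := summable_geometric_two
  have hw : Summable w := Summable.of_norm_bounded hgeo hwn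
  let x : X := ∑' j, w j
  -- the key estimate
  have key : ∀ p m, m ∈ E p → ‖T m x - y p‖ ≤ 5 * (1 / 2 : ℝ) ^ p := by
    intro p m hm
    have hdisj : ∀ j, j ≠ p → m ∉ E j := by
      intro j hj hmj
      rcases le_total j p with h | h
      · have := hE2 j p m m h hmj hm (Or.inl hj)
        have := hN1 p; omega
      · have := hE2 p j m m h hm hmj (Or.inl hj.symm)
        have := hN1 j; omega
    let g : ℕ → ℕ → Y := fun j n => if n = m then 0 else T m (f j n)
    have hsep : ∀ j n, n ∈ E j → n ≠ m → n + N (max j p) ≤ m ∨ m + N (max j p) ≤ n := by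
      intro j n hn hnm
      rcases le_total j p with h | h
      · rw [max_eq_right h]
        exact hE2 j p n m h hn hm (Or.inr hnm)
      · rw [max_eq_left h]
        exact (hE2 p j m n h hm hn (Or.inr hnm.symm)).symm
    have hgF : ∀ j, ∀ F : Finset ℕ, ‖∑ n ∈ F, g j n‖ ≤ 2 * (1 / 4 : ℝ) ^ (max j p) := by
      intro j F
      have hN' := hN j (max j p) (le_max_left _ _)
      set K := N (max j p) with hK
      let F1 := F.filter (fun n => n ∈ E j ∧ n < m)
      let F2 := F.filter (fun n => n ∈ E j ∧ m < n)
      have e0 : ∑ n ∈ F, g j n = ∑ n ∈ F1, T m (S n (y j)) + ∑ n ∈ F2, T m (S n (y j)) := by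
        simp only [F1, F2, Finset.sum_filter]
        rw [← Finset.sum_add_distrib]
        refine Finset.sum_congr rfl fun n _ => ?_
        by_cases hn : n ∈ E j
        · rcases lt_trichotomy n m with h | h | h
          · simp [g, f, hn, h, h.ne, h.not_gt]
          · simp [g, h]
          · simp [g, f, hn, h, h.ne', h.not_gt]
        · simp [g, f, hn]
      have m1 : ∀ n ∈ F1, n + K ≤ m := by
        intro n hn
        obtain ⟨-, hn1, hn2⟩ := Finset.mem_filter.1 hn
        rcases hsep j n hn1 hn2.ne with h | h
        · exact h
        · omega
      have m2 : ∀ n ∈ F2, m + K ≤ n := by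
        intro n hn
        obtain ⟨-, hn1, hn2⟩ := Finset.mem_filter.1 hn
        rcases hsep j n hn1 hn2.ne' with h | h
        · omega
        · exact h
      have e1 : ∑ n ∈ F1, T m (S n (y j)) =
          ∑ n ∈ F1.image (fun n => m - n), T m (S (m - n) (y j)) := by
        rw [Finset.sum_image]
        · refine Finset.sum_congr rfl fun n hn => ?_
          have := m1 n hn
          rw [Nat.sub_sub_self (by omega)]
        · intro a ha b hb hab
          have := m1 a ha
          have := m1 b hb
          simp only at hab
          omega
      have e2 : ∑ n ∈ F2, T m (S n (y j)) =
          ∑ n ∈ F2.image (fun n => n - m), T m (S (m + n) (y j)) := by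
        rw [Finset.sum_image]
        · refine Finset.sum_congr rfl fun n hn => ?_
          have := m2 n hn
          rw [Nat.add_sub_of_le (by omega)]
        · intro a ha b hb hab
          have := m2 a ha
          have := m2 b hb
          simp only at hab
          omega
      have b1 := hN'.1 m (F1.image (fun n => m - n)) (by
        intro n hn
        obtain ⟨k, hk, rfl⟩ := Finset.mem_image.1 hn
        have := m1 k hk
        omega)
      have b2 := hN'.2.1 m (F2.image (fun n => n - m)) (by
        intro n hn
        obtain ⟨k, hk, rfl⟩ := Finset.mem_image.1 hn
        have := m2 k hk
        omega)
      rw [e0, e1, e2]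
      refine (norm_add_le _ _).trans ?_
      linarith
    have hTf : ∀ j, Summable fun n => T m (f j n) := fun j => (hf j).map (T m) (T m).continuous
    have hgu : ∀ j, g j = Function.update (fun n => T m (f j n)) m 0 := by
      intro j; funext n; simp [g, Function.update_apply]
    have hgs : ∀ j, HasSum (g j) (T m (w j) - T m (f j m)) := by
      intro j
      have := ((T m).hasSum (hf j).hasSum).update m 0
      rw [← hgu j] at this
      convert this using 1
      simp only [Function.comp, w]
      abel
    have hgn : ∀ j, ‖T m (w j) - T m (f j m)‖ ≤ 2 * (1 / 2 : ℝ) ^ p * (1 / 2) ^ j := by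
      intro j
      rw [← (hgs j).tsum_eq]
      refine (norm_tsum_le_of_finset _ (hgs j).summable _ (hgF j)).trans ?_
      have : (1 / 4 : ℝ) ^ (max j p) ≤ (1 / 2 : ℝ) ^ p * (1 / 2) ^ j := by
        have e : (1 / 4 : ℝ) = (1 / 2) * (1 / 2) := by norm_num
        rw [e, mul_pow]
        gcongr ?_ * ?_
        · exact pow_le_pow_of_le_one (by norm_num) (by norm_num) (le_max_right _ _)
        · exact pow_le_pow_of_le_one (by norm_num) (by norm_num) (le_max_left _ _)
      linarith
    have hfm : HasSum (fun j => T m (f j m)) (T m (S m (y p))) := by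
      have := hasSum_single (f := fun j => T m (f j m)) p (by
        intro j hj
        simp [f, hdisj j hj])
      simpa [f, hm] using this
    have htot : HasSum (fun j => T m (w j) - T m (f j m)) (T m x - T m (S m (y p))) :=
      ((T m).hasSum hw.hasSum).sub hfm
    have hb : ‖T m x - T m (S m (y p))‖ ≤ 4 * (1 / 2 : ℝ) ^ p := by
      rw [← htot.tsum_eq]
      have hs : HasSum (fun j : ℕ => 2 * (1 / 2 : ℝ) ^ p * (1 / 2) ^ j)
          (2 * (1 / 2 : ℝ) ^ p * 2) := hasSum_geometric_two.mul_left _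
      refine (tsum_of_norm_bounded hs hgn).trans (le_of_eq (by ring))
    have hc := (hN p p le_rfl).2.2.2 m (hE1 p m hm)
    have e : T m x - y p = (T m x - T m (S m (y p))) + (T m (S m (y p)) - y p) := by abel
    rw [e]
    refine (norm_add_le _ _).trans ?_
    have := hq2 p
    linarith
  refine ⟨x, fun α hα hs U hU hUne => ?_⟩
  -- locate an index `p`
  have hzY : DenseRange fun k => (z k : Y) :=
    hY₀.denseRange_val.comp hz continuous_subtype_val
  obtain ⟨k, hk⟩ := hzY.exists_mem_open hU hUne
  obtain ⟨r, hr, hball⟩ := Metric.isOpen_iff.1 hU _ hk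
  obtain ⟨l, hl⟩ := exists_pow_lt_of_lt_one (show (0 : ℝ) < r / 5 by positivity)
    (show (1 / 2 : ℝ) < 1 by norm_num)
  let p := Nat.pair k l
  have hyp : y p = z k := by simp [y, p]
  refine hE3 α hα hs p _ fun m hm => ?_
  refine hball ?_
  have h5 := key p m hm
  rw [hyp] at h5
  rw [Metric.mem_ball, dist_eq_norm]
  have h6 : (1 / 2 : ℝ) ^ p ≤ (1 / 2) ^ l :=
    pow_le_pow_of_le_one (by norm_num) (by norm_num) (Nat.right_le_pair k l)
  linarith
end
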